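/- arXiv:2406.06766 — 2 statements merged into one kernel-verified Lean document; each statement's English description precedes it below -/
import Mathlib

section
/- Let R = k[x_1,…,x_d] with d ≥ 3 and let E be a torsion-free R-module of rank e and projective dimension one with μ(E) = d+e, minimal free resolution 0 → R^d →φ R^{d+e} → E → 0 where φ = [φ′ | φ″] with φ′ having d−2 columns of linear forms and φ″ two columns of quadrics, I_1(φ) = (x_1,…,x_d), and E satisfying G_d. Write S(E) ≅ B/(ℓ_1,…,ℓ_d) with B = R ⊗_k T bigraded as usual. Then, in the duality theorem applied to the regular sequence ℓ_1,…,ℓ_d, one has δ = 2 and τ = d; moreover S(E)_0 is a free T-module of rank one, rank_T S(E)_1 = 2, and rank_T S(E)_2 = 1. -/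
/-!
STATEMENT 7: `R = k[x_1,…,x_d]`, `d ≥ 3`, `E` torsion-free of rank `e`, `pd E = 1`,
`μ(E) = d+e`, presented by `φ = [φ′ | φ″]` with `d−2` linear columns and two columns of
quadrics, `I_1(φ) = (x_1,…,x_d)`, `E` satisfying `G_d`.  For `S(E) ≅ B/(ℓ_1,…,ℓ_d)`, in
the duality theorem applied to `ℓ_1,…,ℓ_d` one has `δ = 2` and `τ = d`; moreover
`S(E)_0` is a free `T`-module of rank one, `rank_T S(E)_1 = 2` and `rank_T S(E)_2 = 1`.
-/

open MvPolynomial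

noncomputable section

namespace Stmt7

variable (k : Type) [Field k] (d n : ℕ)

/-- `B = R ⊗_k T = k[x_1,…,x_d,y_1,…,y_n]`. -/
abbrev B := MvPolynomial (Fin d ⊕ Fin n) k

/-- `T = k[y_1,…,y_n]`. -/
abbrev T := MvPolynomial (Fin n) k

/-- `B` is a `T`-algebra via `y_j ↦ y_j`. -/
instance : Algebra (T k n) (B k d n) :=
  ((rename Sum.inr : T k n →ₐ[k] B k d n).toRingHom).toAlgebra

/-- The bigrading weight: `bideg x_i = (1,0)`, `bideg y_j = (0,1)`. -/
def bwt : (Fin d ⊕ Fin n) → ℕ × ℕ := Sum.elim (fun _ => (1, 0)) (fun _ => (0, 1))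

/-- The `x`-degree weight. -/
def wx : (Fin d ⊕ Fin n) → ℕ := Sum.elim (fun _ => 1) (fun _ => 0)

/-- The ideal `m = (x_1,…,x_d)B`. -/
def mxB : Ideal (B k d n) := Ideal.span (Set.range fun i : Fin d => (X (Sum.inl i) : B k d n))

variable (I : Ideal (B k d n))

/-- `A = H⁰_m(S)`: elements of `S = B/I` annihilated by a power of `m`. -/
def H0 : Submodule (B k d n) (B k d n ⧸ I) :=
  ⨆ N : ℕ, Submodule.torsionBySet (B k d n) (B k d n ⧸ I)
    ((mxB k d n ^ N : Ideal (B k d n)) : Set (B k d n))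

/-- The bigraded component of `S = B/I` in bidegree `p`. -/
def Scomp (p : ℕ × ℕ) : Submodule k (B k d n ⧸ I) :=
  (weightedHomogeneousSubmodule k (bwt d n) p).map (Ideal.Quotient.mkₐ k I).toLinearMap

/-- The graded strand `S_j = ⊕_b S_{(j,b)}` of `S` in `x`-degree `j`, as a `T`-module. -/
def SxDeg (j : ℕ) : Submodule (T k n) (B k d n ⧸ I) :=
  Submodule.span (T k n) ((Ideal.Quotient.mk I) '' {g : B k d n | g.IsWeightedHomogeneous (wx d n) j})

/-- The graded strand of `S` in (possibly negative) `x`-degree `i : ℤ`. -/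
def SxDegZ (i : ℤ) : Submodule (T k n) (B k d n ⧸ I) :=
  if 0 ≤ i then SxDeg k d n I i.toNat else ⊥

/-- The graded strand `A_i = ⊕_b A_{(i,b)}` of `A = H⁰_m(S)`, as a `T`-module. -/
def AcompZ (i : ℤ) : Submodule (T k n) (B k d n ⧸ I) :=
  (H0 k d n I).restrictScalars (T k n) ⊓ SxDegZ k d n I i

/-- The graded component of `T` in (possibly negative) degree `j`. -/
def TcompZ (j : ℤ) : Submodule k (T k n) :=
  if 0 ≤ j then homogeneousSubmodule (Fin n) k j.toNat else ⊥

/-- The ideal of `t × t` minors of a matrix. -/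
def minorsIdeal {R : Type} [CommRing R] {m' n' : Type} (M : Matrix m' n' R) (t : ℕ) :
    Ideal R :=
  Ideal.span {x | ∃ (f : Fin t → m') (g : Fin t → n'), x = (M.submatrix f g).det}

/-- `ht I ≥ c`: every prime containing `I` has height (= dimension of the localization)
at least `c`. -/
def htGE {R : Type} [CommRing R] (I : Ideal R) (c : ℕ) : Prop :=
  ∀ (p : Ideal R) (_ : p.IsPrime), I ≤ p →
    (c : WithBot ℕ∞) ≤ ringKrullDim (Localization.AtPrime p)


theorem chEquiv {F κ ι : Type*} [Field F] [Fintype ι] (b : Module.Basis κ F (ι → F)) :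
    ∃ g : MvPolynomial κ F ≃ₐ[F] MvPolynomial ι F, ∀ s, g (X s) = ∑ i, C (b s i) * X i := by
  classical
  refine ⟨(SymmetricAlgebra.equivMvPolynomial b).symm.trans
    (SymmetricAlgebra.equivMvPolynomial (Pi.basisFun F ι)), fun s => ?_⟩
  have : (SymmetricAlgebra.equivMvPolynomial (Pi.basisFun F ι)) (SymmetricAlgebra.ι F _ (b s))
      = (Pi.basisFun F ι).constr F X (b s) := SymmetricAlgebra.lift_ι_apply _ _
  simp [this, Module.Basis.constr_apply_fintype, MvPolynomial.smul_eq_C_mul]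

open Classical in
def killX (F : Type*) [Field F] {κ : Type*} (s : Finset κ) : MvPolynomial κ F →ₐ[F] MvPolynomial κ F :=
  aeval fun i => if i ∈ s then 0 else X i

theorem height_killX {F κ : Type*} [Field F] (s : Finset κ) :
    (s.card : ℕ∞) ≤ (RingHom.ker (killX F s)).height := by
  classical
  induction s using Finset.induction_on with
  | empty => simp
  | insert a s ha ih =>
    rw [Finset.card_insert_of_notMem ha]
    push_cast
    have h1 : RingHom.ker (killX F s) < RingHom.ker (killX F (insert a s)) := by
      have hcomp : (killX F (insert a s)).comp (killX F s) = killX F (insert a s) := by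
        apply MvPolynomial.algHom_ext
        intro i
        by_cases h : i ∈ s <;> simp [killX, h]
      rw [SetLike.lt_iff_le_and_exists]
      constructor
      · intro x hx
        rw [RingHom.mem_ker] at hx ⊢
        rw [← hcomp, AlgHom.comp_apply, hx, map_zero]
      · refine ⟨X a, ?_, ?_⟩
        · simp [killX, RingHom.mem_ker]
        · simp [killX, RingHom.mem_ker, ha]
    have := RingHom.ker_isPrime (killX F s)
    have := RingHom.ker_isPrime (killX F (insert a s))
    calc _ ≤ (RingHom.ker (killX F s)).height + 1 := by gcongr
      _ ≤ _ := Ideal.height_add_one_le_of_lt_of_isPrime h1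

theorem height_ge_of_X {F κ : Type*} [Field F] (s : Finset κ) (Q : Ideal (MvPolynomial κ F))
    (hs : ∀ i ∈ s, X i ∈ Q) : (s.card : ℕ∞) ≤ Q.height := by
  classical
  refine (height_killX s).trans (Ideal.height_mono ?_)
  intro x hx
  have : (Ideal.Quotient.mkₐ F Q).comp (killX F s) = Ideal.Quotient.mkₐ F Q := by
    apply MvPolynomial.algHom_ext
    intro i
    by_cases h : i ∈ s
    · simp [killX, h, (Ideal.Quotient.eq_zero_iff_mem.2 (hs i h))]
    · simp [killX, h]
  have h2 := DFunLike.congr_fun this x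
  rw [RingHom.mem_ker] at hx
  simp only [AlgHom.comp_apply, hx, map_zero] at h2
  exact Ideal.Quotient.eq_zero_iff_mem.1 h2.symm

theorem height_ge_of_forms {F ι : Type*} [Field F] [Fintype ι] (Q : Ideal (MvPolynomial ι F))
    (W : Submodule F (ι → F)) (hW : ∀ w ∈ W, ∑ i, C (w i) * X i ∈ Q) :
    (Module.finrank F W : ℕ∞) ≤ Q.height := by
  classical
  set v := Module.finBasis F W
  have hv : LinearIndependent F (fun i => (v i : ι → F)) :=
    v.linearIndependent.map' W.subtype (by simp)
  let b := Module.Basis.sumExtend hv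
  have hb : ∀ i, b (Sum.inl i) = v i := fun i => by
    simp only [b, Module.Basis.sumExtend, Module.Basis.coe_reindex, Function.comp_apply, Module.Basis.extend_apply_self]; rfl
  obtain ⟨g, hg⟩ := chEquiv b
  have := RingEquiv.height_comap g.toRingEquiv Q
  rw [← this]
  have h2 := height_ge_of_X (Finset.univ.image (Sum.inl : Fin (Module.finrank F W) → Fin (Module.finrank F W) ⊕ Module.Basis.sumExtendIndex hv)) (Q.comap g.toRingEquiv) ?_
  · rwa [Finset.card_image_of_injective _ Sum.inl_injective, Finset.card_univ, Fintype.card_fin] at h2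
  · intro i hi
    simp only [Finset.mem_image, Finset.mem_univ, true_and] at hi
    obtain ⟨j, rfl⟩ := hi
    rw [Ideal.mem_comap]
    change g (X (Sum.inl j)) ∈ Q
    rw [hg, hb]
    exact hW _ (v j).2

theorem height_fiber {R : Type*} [CommRing R] [IsNoetherianRing R] {n m : ℕ}
    (P : Ideal (MvPolynomial (Fin n) R)) [P.IsPrime] (p : Ideal R) [p.IsPrime] (hp : p = P.comap C)
    (φ : Matrix (Fin n) (Fin m) R)
    (hP : ∀ i, ∑ j, C (φ j i) * X j ∈ P) :
    p.height + (Module.finrank p.ResidueField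
      (LinearMap.range (φ.map (algebraMap R p.ResidueField)).mulVecLin) : ℕ∞) ≤ P.height := by
  classical
  have hover : P.LiesOver p := ⟨hp⟩
  rw [Ideal.height_eq_height_add_of_liesOver_of_hasGoingDown p P]
  gcongr
  have hle : p.map (C : R →+* MvPolynomial (Fin n) R) ≤ P := by
    rw [Ideal.map_le_iff_le_comap, hp]
  let e := (quotientEquivQuotientMvPolynomial (σ := Fin n) p).toRingEquiv
  let P' := P.map (Ideal.Quotient.mk (p.map (C : R →+* MvPolynomial (Fin n) R)))
  have hP' : P'.IsPrime := Ideal.map_isPrime_of_surjective Ideal.Quotient.mk_surjective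
    (by rwa [Ideal.mk_ker])
  have hmem : ∀ x, Ideal.Quotient.mk (p.map (C : R →+* MvPolynomial (Fin n) R)) x ∈ P' ↔ x ∈ P := by
    intro x
    rw [← Ideal.mem_comap, Ideal.comap_map_mk hle]
  let P2 := P'.comap e
  have hP2 : P2.IsPrime := Ideal.IsPrime.comap e
  have heX : ∀ x : MvPolynomial (Fin n) R, e (MvPolynomial.map (Ideal.Quotient.mk p) x)
      = Ideal.Quotient.mk _ x := by
    intro x
    have : (e : _ →+* _).comp (MvPolynomial.map (Ideal.Quotient.mk p)) =
      Ideal.Quotient.mk (p.map (C : R →+* MvPolynomial (Fin n) R)) := by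
      apply MvPolynomial.ringHom_ext
      · intro r
        simp [e, quotientEquivQuotientMvPolynomial]
      · intro i
        simp [e, quotientEquivQuotientMvPolynomial]
    exact DFunLike.congr_fun this x
  have hm2 : ∀ x, MvPolynomial.map (Ideal.Quotient.mk p) x ∈ P2 ↔ x ∈ P := by
    intro x
    rw [Ideal.mem_comap, heX, hmem]
  have h1 : P2.height = P'.height := RingEquiv.height_comap e P'
  change _ ≤ P'.height
  rw [← h1]
  have hdis : Disjoint (((nonZeroDivisors (R ⧸ p)).map (C (σ := Fin n)) : Submonoid _) : Set (MvPolynomial (Fin n) (R ⧸ p))) (P2 : Set _) := by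
    rw [Set.disjoint_left]
    rintro _ ⟨r, hr, rfl⟩ hrP
    obtain ⟨r, rfl⟩ := Ideal.Quotient.mk_surjective r
    have : C r ∈ P := by
      rw [← hm2]; simpa using hrP
    have : r ∈ p := by rw [hp]; exact this
    rw [Ideal.Quotient.eq_zero_iff_mem.2 this] at hr
    exact nonZeroDivisors.ne_zero hr rfl
  let _ : Algebra (MvPolynomial (Fin n) (R ⧸ p)) (MvPolynomial (Fin n) p.ResidueField) := algebraMvPolynomial
  have h2 := IsLocalization.height_map_of_disjoint (S := MvPolynomial (Fin n) p.ResidueField)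
    ((nonZeroDivisors (R ⧸ p)).map (C (σ := Fin n))) P2 hdis
  rw [← h2]
  apply height_ge_of_forms
  rintro _ ⟨v, rfl⟩
  have : ∑ i, C (((φ.map (algebraMap R p.ResidueField)).mulVecLin v) i) * X i =
     ∑ a, C (v a) * algebraMap _ (MvPolynomial (Fin n) p.ResidueField) (MvPolynomial.map (Ideal.Quotient.mk p) (∑ j, C (φ j a) * X j)) := by
    simp only [Matrix.mulVecLin_apply, Matrix.mulVec, dotProduct, map_sum, Finset.sum_mul, Finset.mul_sum, map_mul]
    rw [Finset.sum_comm]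
    refine Finset.sum_congr rfl fun a _ => Finset.sum_congr rfl fun j _ => ?_
    have h3 : (algebraMap (R ⧸ p) p.ResidueField) (Ideal.Quotient.mk p (φ j a)) = algebraMap R p.ResidueField (φ j a) := rfl
    simp only [MvPolynomial.algebraMap_def, MvPolynomial.map_C, MvPolynomial.map_X, Matrix.map_apply, h3]
    ring
  rw [this]
  refine Ideal.sum_mem _ fun a _ => Ideal.mul_mem_left _ _ (Ideal.mem_map_of_mem _ ?_)
  rw [hm2]; exact hP a

theorem isUnit_aux {R K Q : Type*} [CommRing R] [Field K] [Algebra R K] [AddCommGroup Q] [Module R Q]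
    [Module K Q] [IsScalarTower R K Q] (x : R) (hx : algebraMap R K x ≠ 0) :
    IsUnit ((algebraMap R (Module.End R Q)) x) := by
  refine ⟨⟨algebraMap R (Module.End R Q) x, (algebraMap K (Module.End K Q) (algebraMap R K x)⁻¹).restrictScalars R, ?_, ?_⟩, rfl⟩
  · refine LinearMap.ext fun q => ?_
    change x • ((algebraMap R K x)⁻¹ • q) = q
    rw [← IsScalarTower.algebraMap_smul K x, smul_smul, mul_inv_cancel₀ hx, one_smul]
  · refine LinearMap.ext fun q => ?_
    change (algebraMap R K x)⁻¹ • (x • q) = q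
    rw [← IsScalarTower.algebraMap_smul K x, smul_smul, inv_mul_cancel₀ hx, one_smul]

theorem span_aux {R E K Q : Type*} [CommRing R] [AddCommGroup E] [Module R E]
    [Field K] [Algebra R K] [AddCommGroup Q] [Module R Q]
    [Module K Q] [IsScalarTower R K Q] (p : Ideal R) [p.IsPrime]
    [Algebra (Localization.AtPrime p) K] [IsScalarTower R (Localization.AtPrime p) K]
    [Module (Localization.AtPrime p) Q] [IsScalarTower (Localization.AtPrime p) K Q]
    [IsScalarTower R (Localization.AtPrime p) Q]
    (hK : ∀ x : p.primeCompl, algebraMap R K x ≠ 0)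
    (f1 : E →ₗ[R] Q) (hf1 : Submodule.span K (Set.range f1) = ⊤)
    (s : Finset (LocalizedModule p.primeCompl E))
    (hs : Submodule.span (Localization.AtPrime p)
          (s : Set (LocalizedModule p.primeCompl E)) = ⊤) : Module.finrank K Q ≤ s.card := by
  classical
  let f2 : LocalizedModule p.primeCompl E →ₗ[R] Q :=
    LocalizedModule.lift p.primeCompl f1 (fun x => isUnit_aux (K := K) _ (hK x))
  have hf2 : ∀ x, f2 (LocalizedModule.mkLinearMap p.primeCompl E x) = f1 x := by
    intro x
    simp [f2, LocalizedModule.lift_mk]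
  let f3 := f2.extendScalarsOfIsLocalization p.primeCompl (Localization.AtPrime p)
  have key : Submodule.span K (f2 '' s) = ⊤ := by
    have hall : ∀ x, f3 x ∈ (Submodule.span K (f2 '' s)).restrictScalars (Localization.AtPrime p) := by
      intro x
      have hx : x ∈ Submodule.span (Localization.AtPrime p) (s : Set (LocalizedModule p.primeCompl E)) := by
        rw [hs]; trivial
      rw [← Submodule.mem_comap]
      refine Submodule.span_le.2 ?_ hx
      intro y hy
      exact Submodule.subset_span ⟨y, hy, rfl⟩
    rw [eq_top_iff, ← hf1, Submodule.span_le]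
    rintro _ ⟨x, rfl⟩
    have := hall (LocalizedModule.mkLinearMap p.primeCompl E x)
    change f2 _ ∈ _ at this
    rw [hf2] at this
    exact this
  rw [← finrank_top, ← key, ← Finset.coe_image]
  exact (finrank_span_finset_le_card _).trans Finset.card_image_le

theorem rank_ge_of_gens {R E : Type*} [CommRing R] [AddCommGroup E] [Module R E] {n m : ℕ}
    (φ : Matrix (Fin n) (Fin m) R) (π : (Fin n → R) →ₗ[R] E)
    (hsurj : Function.Surjective π)
    (hker : LinearMap.ker π = LinearMap.range φ.mulVecLin) (p : Ideal R) [p.IsPrime]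
    (s : Finset (LocalizedModule p.primeCompl E))
    (hs : Submodule.span (Localization.AtPrime p)
          (s : Set (LocalizedModule p.primeCompl E)) = ⊤) :
    n ≤ s.card + Module.finrank p.ResidueField
      (LinearMap.range (φ.map (algebraMap R p.ResidueField)).mulVecLin) := by
  classical
  set W := LinearMap.range (φ.map (algebraMap R p.ResidueField)).mulVecLin with hWdef
  let inc : ∀ a, (Fin a → R) →ₗ[R] (Fin a → p.ResidueField) := fun a =>
    LinearMap.compLeft (Algebra.linearMap R p.ResidueField) (Fin a)
  let f0 : (Fin n → R) →ₗ[R] ((Fin n → p.ResidueField) ⧸ W) := (W.mkQ.restrictScalars R) ∘ₗ inc n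
  have hf0 : LinearMap.ker π ≤ LinearMap.ker f0 := by
    rw [hker]
    rintro _ ⟨v, rfl⟩
    rw [LinearMap.mem_ker]
    change W.mkQ (inc n (φ.mulVecLin v)) = 0
    rw [Submodule.mkQ_apply, Submodule.Quotient.mk_eq_zero]
    refine ⟨inc m v, ?_⟩
    ext i
    simp [inc, Matrix.mulVec, dotProduct]
  let f1 : E →ₗ[R] ((Fin n → p.ResidueField) ⧸ W) :=
    ((LinearMap.ker π).liftQ f0 hf0) ∘ₗ (π.quotKerEquivOfSurjective hsurj).symm.toLinearMap
  have hf1 : ∀ v, f1 (π v) = f0 v := by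
    intro v
    have : (π.quotKerEquivOfSurjective hsurj).symm (π v) = Submodule.Quotient.mk v := by
      rw [LinearEquiv.symm_apply_eq]; rfl
    simp [f1, this]
  have h1 : Module.finrank p.ResidueField ((Fin n → p.ResidueField) ⧸ W) ≤ s.card := by
    refine span_aux p ?_ f1 ?_ s hs
    · intro x h
      rw [Ideal.algebraMap_residueField_eq_zero] at h
      exact x.2 h
    · rw [eq_top_iff]
      rintro q -
      obtain ⟨q, rfl⟩ := Submodule.mkQ_surjective _ q
      rw [← Submodule.mem_comap]
      have hq : q = ∑ i, q i • inc n (Pi.single i 1) := by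
        ext j
        simp [inc, Finset.sum_apply, Pi.single_apply]
      rw [hq]
      refine Submodule.sum_mem _ fun i _ => Submodule.smul_mem _ _ ?_
      rw [Submodule.mem_comap]
      refine Submodule.subset_span ⟨π (Pi.single i 1), ?_⟩
      rw [hf1]
      rfl
  have h2 := Submodule.finrank_quotient_add_finrank W
  rw [Module.finrank_fin_fun] at h2
  lia

theorem rank_of_inj {R : Type*} [CommRing R] {n m : ℕ}
    (φ : Matrix (Fin n) (Fin m) R) (hinj : Function.Injective φ.mulVecLin)
    (p : Ideal R) [p.IsPrime] (hp : p = ⊥) :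
    Module.finrank p.ResidueField
      (LinearMap.range (φ.map (algebraMap R p.ResidueField)).mulVecLin) = m := by
  classical
  have hR : Function.Injective (algebraMap R p.ResidueField) := by
    rw [injective_iff_map_eq_zero]
    intro a ha
    rw [Ideal.algebraMap_residueField_eq_zero] at ha
    rw [hp] at ha; simpa using ha
  rw [LinearMap.finrank_range_of_inj, Module.finrank_fin_fun]
  rw [injective_iff_map_eq_zero]
  intro v hv
  obtain ⟨b, hb⟩ := IsLocalization.exist_integer_multiples_of_finite (nonZeroDivisors (R ⧸ p)) v
  have hb' : ∀ i, ∃ r : R, algebraMap R p.ResidueField r = (b : R ⧸ p) • v i := by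
    intro i
    obtain ⟨r, hr⟩ := hb i
    obtain ⟨r, rfl⟩ := Ideal.Quotient.mk_surjective r
    exact ⟨r, hr⟩
  choose w hw using hb'
  have hbne : algebraMap (R ⧸ p) p.ResidueField b ≠ 0 := by
    simp
  have : φ.mulVecLin w = 0 := by
    ext i
    apply hR
    have := congrFun hv i
    simp only [Matrix.mulVecLin_apply, Matrix.mulVec, dotProduct, Matrix.map_apply, Pi.zero_apply, map_sum, map_mul, hw, map_zero, Algebra.smul_def] at this ⊢
    rw [show (0 : p.ResidueField) = algebraMap (R ⧸ p) p.ResidueField b * 0 by simp, ← this, Finset.mul_sum]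
    exact Finset.sum_congr rfl fun _ _ => by ring
  have hw0 : w = 0 := hinj (by rw [this, map_zero])
  ext i
  have := hw i
  rw [hw0, Algebra.smul_def] at this
  simpa [hbne] using this.symm

theorem finrank_homog_two (F : Type*) [Field F] (n : ℕ) :
    Module.finrank F (homogeneousSubmodule (Fin 2) F n) = n + 1 := by
  classical
  let b : Fin (n + 1) → (Fin 2 →₀ ℕ) := fun i => Finsupp.single 0 (i : ℕ) + Finsupp.single 1 (n - i)
  have hinj : Function.Injective b := by
    intro i j h
    have := DFunLike.congr_fun h 0
    simp [b] at this
    exact Fin.ext this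
  have hb : ∀ i, (b i).degree = n := by
    intro i
    simp only [b, map_add, Finsupp.degree_single]
    lia
  have hspan : homogeneousSubmodule (Fin 2) F n =
      Submodule.span F (Set.range fun i => monomial (b i) (1 : F)) := by
    apply le_antisymm
    · intro p hp
      rw [← p.support_sum_monomial_coeff]
      refine Submodule.sum_mem _ fun s hs => ?_
      have hsd : s.degree = n := IsHomogeneous.degree_eq_sum_deg_support hp hs |>.symm
      have h2 : s 0 + s 1 = n := by
        rw [← hsd, Finsupp.degree_eq_sum]; simp
      have : s = b ⟨s 0, by lia⟩ := by
        ext j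
        fin_cases j
        · simp [b]
        · simp [b]; lia
      have hm : monomial s (coeff s p) = coeff s p • monomial s (1 : F) := by
        simp [smul_monomial]
      rw [hm]
      refine Submodule.smul_mem _ _ (Submodule.subset_span ⟨⟨s 0, by lia⟩, ?_⟩)
      simp only
      rw [← this]
    · rw [Submodule.span_le]
      rintro _ ⟨i, rfl⟩
      exact isHomogeneous_monomial _ (hb i)
  rw [hspan, finrank_span_eq_card]
  · simp
  · have := (basisMonomials (Fin 2) F).linearIndependent.comp b hinj
    simpa [Function.comp_def] using! this

theorem homog_comp_mul {F σ : Type*} [Field F] (c r : MvPolynomial σ F) (hr : r.IsHomogeneous 2) :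
    homogeneousComponent 1 (c * r) = 0 ∧ homogeneousComponent 2 (c * r) = C (coeff 0 c) * r := by
  classical
  letI := MvPolynomial.gradedAlgebra (σ := σ) (R := F)
  have hd : ∀ n (x : MvPolynomial σ F), ((DirectSum.decompose (homogeneousSubmodule σ F) x) n : MvPolynomial σ F)
      = homogeneousComponent n x := fun n x => decomposition.decompose'_apply x n
  have h1 := DirectSum.coe_decompose_mul_of_right_mem_of_not_le (𝒜 := homogeneousSubmodule σ F) (a := c) (b := r) (i := 2) (n := 1)
  have h2 := DirectSum.coe_decompose_mul_of_right_mem_of_le (𝒜 := homogeneousSubmodule σ F) (a := c) (b := r) (i := 2) (n := 2)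
  constructor
  · rw [← hd]
    exact h1 hr (by norm_num)
  · have := h2 hr le_rfl
    rw [Nat.sub_self, hd, hd, homogeneousComponent_zero] at this
    exact this

theorem finrank_map_aux {F V W : Type*} [Field F] [AddCommGroup V] [Module F V] [AddCommGroup W] [Module F W]
    (A : Submodule F V) [FiniteDimensional F A] (f : V →ₗ[F] W) (a b c : ℕ)
    (ha : Module.finrank F A = a) (hb : Module.finrank F (A ⊓ LinearMap.ker f : Submodule F V) = b)
    (hc : a = b + c) : Module.finrank F (A.map f) = c := by
  have h := LinearMap.finrank_range_add_finrank_ker (f.domRestrict A)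
  rw [LinearMap.range_domRestrict] at h
  have h2 : Module.finrank F (LinearMap.ker (f.domRestrict A)) = b := by
    rw [← hb, LinearMap.ker_domRestrict]
    have : A ⊓ LinearMap.ker f = (Submodule.comap A.subtype (LinearMap.ker f)).map A.subtype := by
      rw [Submodule.map_comap_subtype]
    rw [this]
    exact (LinearEquiv.finrank_eq (Submodule.equivMapOfInjective A.subtype (Submodule.subtype_injective A) _))
  lia

theorem two_var {F : Type*} [Field F] (r : Fin 2 → MvPolynomial (Fin 2) F)
    (hr : ∀ j, (r j).IsHomogeneous 2) (hli : LinearIndependent F r) :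
    Module.finrank F ((homogeneousSubmodule (Fin 2) F 1).map
      (Ideal.Quotient.mkₐ F (Ideal.span (Set.range r))).toLinearMap) = 2 ∧
    Module.finrank F ((homogeneousSubmodule (Fin 2) F 2).map
      (Ideal.Quotient.mkₐ F (Ideal.span (Set.range r))).toLinearMap) = 1 := by
  have hfin : ∀ n, FiniteDimensional F (homogeneousSubmodule (Fin 2) F n) := fun n =>
    FiniteDimensional.of_finrank_pos (by rw [finrank_homog_two]; lia)
  have hker : ∀ x, x ∈ LinearMap.ker (Ideal.Quotient.mkₐ F (Ideal.span (Set.range r))).toLinearMap ↔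
      ∃ c : Fin 2 → MvPolynomial (Fin 2) F, ∑ i, c i * r i = x := by
    intro x
    rw [← Ideal.mem_span_range_iff_exists_fun, ← Ideal.Quotient.eq_zero_iff_mem]
    rfl
  constructor
  · refine finrank_map_aux _ _ 2 0 2 (finrank_homog_two F 1) ?_ rfl
    have : homogeneousSubmodule (Fin 2) F 1 ⊓ LinearMap.ker (Ideal.Quotient.mkₐ F (Ideal.span (Set.range r))).toLinearMap = ⊥ := by
      rw [eq_bot_iff]
      rintro x ⟨hx1, hx2⟩
      obtain ⟨c, rfl⟩ := (hker x).1 hx2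
      have := homogeneousComponent_eq_self hx1
      rw [map_sum] at this
      simp only [(homog_comp_mul _ _ (hr _)).1, Finset.sum_const_zero] at this
      rw [← this]; simp
    rw [this, finrank_bot]
  · refine finrank_map_aux _ _ 3 2 1 (finrank_homog_two F 2) ?_ rfl
    have : homogeneousSubmodule (Fin 2) F 2 ⊓ LinearMap.ker (Ideal.Quotient.mkₐ F (Ideal.span (Set.range r))).toLinearMap = Submodule.span F (Set.range r) := by
      apply le_antisymm
      · rintro x ⟨hx1, hx2⟩
        obtain ⟨c, rfl⟩ := (hker x).1 hx2
        have := homogeneousComponent_eq_self hx1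
        rw [map_sum] at this
        simp only [(homog_comp_mul _ _ (hr _)).2] at this
        rw [← this]
        refine Submodule.sum_mem _ fun i _ => ?_
        rw [← smul_eq_C_mul]
        exact Submodule.smul_mem _ _ (Submodule.subset_span ⟨i, rfl⟩)
      · rw [Submodule.span_le]
        rintro _ ⟨i, rfl⟩
        refine ⟨hr i, ?_⟩
        rw [SetLike.mem_coe, hker, ← Ideal.mem_span_range_iff_exists_fun]
        exact Ideal.subset_span ⟨i, rfl⟩
    rw [this, finrank_span_eq_card hli, Fintype.card_fin]

theorem field_problem {F : Type*} [Field F] {m d : ℕ} (hd : d = m + 2)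
    (a : Fin m → MvPolynomial (Fin d) F) (q : Fin 2 → MvPolynomial (Fin d) F)
    (ha : ∀ i, (a i).IsHomogeneous 1) (hq : ∀ i, (q i).IsHomogeneous 2)
    (hrel : ∀ (c : Fin m → MvPolynomial (Fin d) F) (c' : Fin 2 → MvPolynomial (Fin d) F),
      ∑ i, c i * a i + ∑ j, c' j * q j = 0 →
        (∀ i, coeff 0 (c i) = 0) ∧ (∀ j, coeff 0 (c' j) = 0))
    (I : Ideal (MvPolynomial (Fin d) F)) (hI : I = Ideal.span (Set.range a ∪ Set.range q)) :
    Module.finrank F ((homogeneousSubmodule (Fin d) F 1).map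
      (Ideal.Quotient.mkₐ F I).toLinearMap) = 2 ∧
    Module.finrank F ((homogeneousSubmodule (Fin d) F 2).map
      (Ideal.Quotient.mkₐ F I).toLinearMap) = 1 := by
  classical
  have hv : ∀ i, ∃ v : Fin d → F, ∑ j, v j • X j = a i := by
    intro i
    have := ha i
    rw [← mem_homogeneousSubmodule, homogeneousSubmodule_one_eq_span_X] at this
    exact (Submodule.mem_span_range_iff_exists_fun F).1 this
  choose v hv using hv
  have hli : LinearIndependent F v := by
    rw [Fintype.linearIndependent_iff]
    intro g hg i
    have := (hrel (fun i => C (g i)) 0 ?_).1 i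
    · simpa using this
    · simp only [Pi.zero_apply, zero_mul, Finset.sum_const_zero, add_zero, ← hv, Finset.mul_sum, ← smul_eq_C_mul, smul_smul]
      rw [Finset.sum_comm]
      refine Finset.sum_eq_zero fun j _ => ?_
      rw [← Finset.sum_smul]
      have := congrFun hg j
      simp only [Finset.sum_apply, Pi.smul_apply, smul_eq_mul, Pi.zero_apply] at this
      rw [this, zero_smul]
  let b0 := Module.Basis.sumExtend hli
  have hb0 : ∀ i, b0 (Sum.inl i) = v i := fun i => by
    simp only [b0, Module.Basis.sumExtend, Module.Basis.coe_reindex, Function.comp_apply, Module.Basis.extend_apply_self]; rfl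
  have hfinJ : Finite (Fin m ⊕ Module.Basis.sumExtendIndex hli) := Module.Finite.finite_basis b0
  have hfinJ' : Finite (Module.Basis.sumExtendIndex hli) := Finite.of_injective (Sum.inr : _ → Fin m ⊕ Module.Basis.sumExtendIndex hli) Sum.inr_injective
  have hcard : Nat.card (Module.Basis.sumExtendIndex hli) = 2 := by
    have h1 := Module.finrank_eq_nat_card_basis b0
    rw [Module.finrank_fin_fun, Nat.card_sum, Nat.card_fin] at h1
    lia
  let eJ : Module.Basis.sumExtendIndex hli ≃ Fin 2 := Finite.equivFinOfCardEq hcard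
  let b := b0.reindex ((Equiv.refl (Fin m)).sumCongr eJ)
  have hb : ∀ i, b (Sum.inl i) = v i := fun i => by simp [b, hb0]
  obtain ⟨g, hg⟩ := chEquiv b
  have hga : ∀ i, g (X (Sum.inl i)) = a i := by
    intro i
    rw [hg, hb, ← hv]
    simp only [smul_eq_C_mul]
  have hg1 : ∀ s, (g (X s)).IsHomogeneous 1 := by
    intro s
    rw [hg]
    exact IsHomogeneous.sum _ _ _ fun i _ => isHomogeneous_C_mul_X _ _
  have hgs : ∀ i, (g.symm (X i)).IsHomogeneous 1 := by
    intro i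
    have : (X i : MvPolynomial (Fin d) F) = ∑ s, (b.repr (Pi.single i 1) s) • g (X s) := by
      have h1 := b.sum_repr (Pi.single i (1:F))
      simp only [hg]
      have h2 : (X i : MvPolynomial (Fin d) F) = ∑ j, C ((Pi.single i (1:F) : Fin d → F) j) * X j := by
        simp [Pi.single_apply]
      rw [h2]
      conv_lhs => rw [← h1]
      simp only [Finset.sum_apply, Pi.smul_apply, smul_eq_mul, map_sum, map_mul, Finset.sum_mul, smul_eq_C_mul, Finset.mul_sum]
      rw [Finset.sum_comm]
      simp only [mul_assoc]
    rw [this]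
    simp only [map_sum, map_smul, AlgEquiv.symm_apply_apply]
    refine IsHomogeneous.sum _ _ _ fun s _ => ?_
    rw [smul_eq_C_mul]
    exact isHomogeneous_C_mul_X _ _
  let h : MvPolynomial (Fin d) F →ₐ[F] MvPolynomial (Fin 2) F :=
    (aeval (Sum.elim 0 X : Fin m ⊕ Fin 2 → MvPolynomial (Fin 2) F)).comp g.symm.toAlgHom
  let s : MvPolynomial (Fin 2) F →ₐ[F] MvPolynomial (Fin d) F := aeval fun j => g (X (Sum.inr j))
  have hs : ∀ x, h (s x) = x := by
    intro x
    have : h.comp s = AlgHom.id F _ := by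
      apply MvPolynomial.algHom_ext
      intro j
      simp [h, s]
    exact DFunLike.congr_fun this x
  have hha : ∀ i, h (a i) = 0 := by
    intro i; simp [h, ← hga]
  have hkera : ∀ x, h x = 0 → x ∈ Ideal.span (Set.range a) := by
    intro x hx
    have : (((Ideal.Quotient.mkₐ F (Ideal.span (Set.range a))).comp s).comp h).comp g.toAlgHom =
       (Ideal.Quotient.mkₐ F (Ideal.span (Set.range a))).comp g.toAlgHom := by
      apply MvPolynomial.algHom_ext
      rintro (i | j)
      · simp [hga, hha, Ideal.Quotient.eq_zero_iff_mem.2 (Ideal.subset_span (Set.mem_range_self i) : a i ∈ Ideal.span (Set.range a))]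
      · simp [h, s]
    have h2 := DFunLike.congr_fun this (g.symm x)
    simp [hx] at h2
    exact Ideal.Quotient.eq_zero_iff_mem.1 h2.symm
  have hhom : ∀ n x, x.IsHomogeneous n → (h x).IsHomogeneous n := by
    intro n x hx
    have h1 : (g.symm x).IsHomogeneous n := by
      have h3 : g.symm x = aeval (fun i => g.symm (X i)) x := by
        have : g.symm.toAlgHom = aeval (fun i => g.symm (X i)) := by
          apply MvPolynomial.algHom_ext
          intro i; simp
        exact DFunLike.congr_fun this x
      rw [h3]
      simpa using hx.aeval _ hgs
    have h2 := h1.aeval (Sum.elim 0 X : Fin m ⊕ Fin 2 → MvPolynomial (Fin 2) F) (n := 1) (by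
      rintro (i | j)
      · exact isHomogeneous_zero _ _ _
      · exact isHomogeneous_X _ _)
    simpa using! h2
  have hshom : ∀ n x, x.IsHomogeneous n → (s x).IsHomogeneous n := by
    intro n x hx
    have h2 := hx.aeval (fun j => g (X (Sum.inr j))) (fun j => hg1 (Sum.inr j))
    simpa using! h2
  let r := fun j => h (q j)
  have hr : LinearIndependent F r := by
    rw [Fintype.linearIndependent_iff]
    intro t ht j
    have h1 : h (∑ j, C (t j) * q j) = 0 := by
      rw [← ht]
      simp [r, smul_eq_C_mul, MvPolynomial.algHom_C]
    obtain ⟨c, hc⟩ := (Ideal.mem_span_range_iff_exists_fun).1 (hkera _ h1)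
    have := (hrel (fun i => - c i) (fun j => C (t j)) (by rw [← hc]; simp)).2 j
    simpa using this
  have hIr : I = (Ideal.span (Set.range r)).comap h := by
    apply le_antisymm
    · rw [hI, Ideal.span_le]
      rintro _ (⟨i, rfl⟩ | ⟨j, rfl⟩)
      · rw [SetLike.mem_coe, Ideal.mem_comap, hha]; exact Ideal.zero_mem _
      · exact Ideal.subset_span ⟨j, rfl⟩
    · intro x hx
      obtain ⟨c, hc⟩ := (Ideal.mem_span_range_iff_exists_fun).1 (Ideal.mem_comap.1 hx)
      have h1 : h (x - ∑ j, s (c j) * q j) = 0 := by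
        rw [map_sub, ← hc]
        simp [hs, r]
      have h2 := hkera _ h1
      have h3 : x = (x - ∑ j, s (c j) * q j) + ∑ j, s (c j) * q j := by ring
      rw [h3, hI, Ideal.span_union]
      refine Submodule.add_mem_sup h2 (Ideal.sum_mem _ fun j _ => Ideal.mul_mem_left _ _ (Ideal.subset_span ⟨j, rfl⟩))
  let θ : (MvPolynomial (Fin d) F ⧸ I) →ₐ[F] (MvPolynomial (Fin 2) F ⧸ Ideal.span (Set.range r)) :=
    Ideal.quotientMapₐ _ h hIr.le
  have hθ : Function.Injective θ := Ideal.quotientMap_injective' (H := hIr.le) hIr.ge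
  have hmap : ∀ n, Module.finrank F ((homogeneousSubmodule (Fin d) F n).map
      (Ideal.Quotient.mkₐ F I).toLinearMap) = Module.finrank F ((homogeneousSubmodule (Fin 2) F n).map
      (Ideal.Quotient.mkₐ F (Ideal.span (Set.range r))).toLinearMap) := by
    intro n
    rw [LinearEquiv.finrank_eq (Submodule.equivMapOfInjective θ.toLinearMap hθ _)]
    have h1 : (homogeneousSubmodule (Fin 2) F n) = (homogeneousSubmodule (Fin d) F n).map h.toLinearMap := by
      apply le_antisymm
      · intro x hx
        exact ⟨s x, hshom n x hx, hs x⟩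
      · rintro _ ⟨x, hx, rfl⟩
        exact hhom n x hx
    rw [h1, ← Submodule.map_comp, ← Submodule.map_comp]
    rfl
  rw [hmap, hmap]
  exact two_var r (fun j => hhom _ _ (hq j)) hr

theorem whomog_of_hom {A A' σ τ M : Type*} [CommRing A] [CommRing A'] [AddCommMonoid M]
    (w : σ → M) (w' : τ → M) (f : MvPolynomial σ A →+* MvPolynomial τ A')
    (hC : ∀ a, (f (C a)).IsWeightedHomogeneous w' 0)
    (hX : ∀ i, (f (X i)).IsWeightedHomogeneous w' (w i))
    (g : MvPolynomial σ A) (m : M) (hg : g.IsWeightedHomogeneous w m) :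
    (f g).IsWeightedHomogeneous w' m := by
  classical
  rw [← g.support_sum_monomial_coeff, map_sum]
  refine (weightedHomogeneousSubmodule A' w' m).sum_mem fun s hs => ?_
  have hw : Finsupp.weight w s = m := hg (mem_support_iff.1 hs)
  rw [mem_weightedHomogeneousSubmodule, monomial_eq, map_mul, Finsupp.prod, map_prod]
  have h1 : IsWeightedHomogeneous w' (∏ i ∈ s.support, f (X i ^ s i)) (∑ i ∈ s.support, s i • w i) := by
    refine IsWeightedHomogeneous.prod _ _ _ fun i _ => ?_
    rw [map_pow]
    exact (hX i).pow _
  have h2 := (hC (coeff s g)).mul h1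
  rw [zero_add] at h2
  rw [Finsupp.weight_apply, Finsupp.sum] at hw
  rwa [hw] at h2

theorem rank_aux {T K M V : Type} [CommRing T] [IsDomain T] [Field K] [Algebra T K]
    [IsFractionRing T K] [AddCommGroup M] [AddCommGroup V] [Module T M] [Module K V] [Module T V]
    [IsScalarTower T K V] (f : M →ₗ[T] V) (hker : ∀ x, f x = 0 → ∃ t : T, t ≠ 0 ∧ t • x = 0)
    (N : Submodule K V) (hspan : Submodule.span K (Set.range f) = N) :
    Module.rank T M = Module.rank K N := by
  have hinj : Function.Injective (algebraMap T K) := IsFractionRing.injective T K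
  have hmem : ∀ x, f x ∈ N := fun x => hspan ▸ Submodule.subset_span ⟨x, rfl⟩
  let f' : M →ₗ[T] N :=
    { toFun := fun x => ⟨f x, hmem x⟩
      map_add' := fun x y => Subtype.ext (map_add f x y)
      map_smul' := fun t x => Subtype.ext (map_smul f t x) }
  have hsurj : ∀ v ∈ Submodule.span K (Set.range f), ∃ t : T, t ≠ 0 ∧ ∃ x, t • v = f x := by
    intro v hv
    induction hv using Submodule.span_induction with
    | mem v hv =>
      obtain ⟨x, rfl⟩ := hv
      exact ⟨1, one_ne_zero, x, one_smul _ _⟩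
    | zero => exact ⟨1, one_ne_zero, 0, by simp⟩
    | add u v _ _ hu hv =>
      obtain ⟨t, ht, x, hx⟩ := hu
      obtain ⟨t', ht', x', hx'⟩ := hv
      refine ⟨t * t', mul_ne_zero ht ht', t' • x + t • x', ?_⟩
      rw [map_add, map_smul, map_smul, ← hx, ← hx', smul_add, smul_smul, smul_smul, mul_comm t t']
    | smul a v _ hv =>
      obtain ⟨t, ht, x, hx⟩ := hv
      obtain ⟨r, s, hs, rfl⟩ := IsFractionRing.div_surjective (A := T) a
      have hs0 : s ≠ 0 := nonZeroDivisors.ne_zero hs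
      have hs1 : algebraMap T K s ≠ 0 := by simpa using hs0
      refine ⟨t * s, mul_ne_zero ht hs0, r • x, ?_⟩
      rw [map_smul, ← hx, ← IsScalarTower.algebraMap_smul K (t * s), ← IsScalarTower.algebraMap_smul K r,
        ← IsScalarTower.algebraMap_smul K t, smul_smul, smul_smul, map_mul]
      congr 1
      field_simp
  have hloc : IsLocalizedModule (nonZeroDivisors T) f' := by
    constructor
    · intro x
      refine isUnit_aux (K := K) _ ?_
      simp
    · intro y
      obtain ⟨t, ht, x, hx⟩ := hsurj y.1 (hspan ▸ y.2)
      exact ⟨(x, ⟨t, mem_nonZeroDivisors_of_ne_zero ht⟩), Subtype.ext hx⟩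
    · intro x y hxy
      have h1 : f (x - y) = 0 := by
        rw [map_sub, sub_eq_zero]
        exact congrArg Subtype.val hxy
      obtain ⟨t, ht, h⟩ := hker _ h1
      refine ⟨⟨t, mem_nonZeroDivisors_of_ne_zero ht⟩, ?_⟩
      rw [smul_sub, sub_eq_zero] at h
      exact h
  rw [← IsLocalizedModule.rank_eq (nonZeroDivisors T) le_rfl f']
  exact (IsLocalization.rank_eq K (nonZeroDivisors T) le_rfl).symm

theorem rank_aux2 {T K M V : Type} [CommRing T] [IsDomain T] [Field K] [Algebra T K]
    [IsFractionRing T K] [AddCommGroup M] [AddCommGroup V] [Module T M] [Module K V]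
    (f : M →+ V) (hsm : ∀ (t : T) (x : M), f (t • x) = algebraMap T K t • f x)
    (hker : ∀ x, f x = 0 → ∃ t : T, t ≠ 0 ∧ t • x = 0)
    (N : Submodule K V) (hspan : Submodule.span K (Set.range f) = N) :
    Module.rank T M = Module.rank K N := by
  let _ : Module T V := Module.compHom V (algebraMap T K)
  have : IsScalarTower T K V := IsScalarTower.of_algebraMap_smul fun _ _ => rfl
  exact rank_aux (K := K) { f with map_smul' := hsm } hker N hspan

theorem height_ge_B (k : Type) [Field k] (d e : ℕ)
    (E : Type) [AddCommGroup E] [Module (MvPolynomial (Fin d) k) E]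
    (φ : Matrix (Fin (d + e)) (Fin d) (MvPolynomial (Fin d) k))
    (hinj : Function.Injective φ.mulVecLin)
    (π : (Fin (d + e) → MvPolynomial (Fin d) k) →ₗ[MvPolynomial (Fin d) k] E)
    (hsurj : Function.Surjective π)
    (hker : LinearMap.ker π = LinearMap.range φ.mulVecLin)
    (hGd : ∀ (p : Ideal (MvPolynomial (Fin d) k)) (_ : p.IsPrime) (c : ℕ),
      ringKrullDim (Localization.AtPrime p) = (c : WithBot ℕ∞) → 1 ≤ c → c ≤ d - 1 →
      ∃ s : Finset (LocalizedModule p.primeCompl E), s.card ≤ c + e - 1 ∧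
        Submodule.span (Localization.AtPrime p)
          (s : Set (LocalizedModule p.primeCompl E)) = ⊤)
    (P : Ideal (B k d (d + e))) [hPp : P.IsPrime]
    (hP : ∀ i, ∑ j, (rename Sum.inl (φ j i)) * X (Sum.inr j) ∈ P) :
    (d : ℕ∞) ≤ P.height := by
  classical
  let ε : B k d (d + e) ≃ₐ[k] MvPolynomial (Fin (d + e)) (MvPolynomial (Fin d) k) :=
    (renameEquiv k (Equiv.sumComm _ _)).trans (sumAlgEquiv k (Fin (d + e)) (Fin d))
  have hε1 : ∀ x, ε (rename Sum.inl x) = C x := by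
    intro x
    have : (ε.toAlgHom.comp (rename Sum.inl)).toRingHom = (C : MvPolynomial (Fin d) k →+* _) := by
      apply MvPolynomial.ringHom_ext
      · intro r; simp [ε]
      · intro i; simp [ε]
    exact DFunLike.congr_fun this x
  have hε2 : ∀ j, ε (X (Sum.inr j)) = X j := by
    intro j; simp [ε]
  let P' : Ideal (MvPolynomial (Fin (d + e)) (MvPolynomial (Fin d) k)) := P.comap ε.symm.toRingEquiv
  have hP'p : P'.IsPrime := Ideal.IsPrime.comap _
  have hht : P'.height = P.height := RingEquiv.height_comap ε.symm.toRingEquiv P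
  rw [← hht]
  let p : Ideal (MvPolynomial (Fin d) k) := P'.comap C
  have hpp : p.IsPrime := Ideal.IsPrime.comap _
  have hmain := height_fiber P' p rfl φ (by
    intro i
    change ε.symm (∑ j, C (φ j i) * X j) ∈ P
    have : ε.symm (∑ j, C (φ j i) * X j) = ∑ j, (rename Sum.inl (φ j i)) * X (Sum.inr j) := by
      rw [AlgEquiv.symm_apply_eq]
      simp [hε1, hε2]
    rw [this]; exact hP i)
  refine le_trans ?_ hmain
  have hfin : p.height ≠ ⊤ := Ideal.height_ne_top_of_isPrime
  obtain ⟨c, hc⟩ := ENat.ne_top_iff_exists.1 hfin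
  have hdim : ringKrullDim (Localization.AtPrime p) = (c : WithBot ℕ∞) := by
    rw [IsLocalization.AtPrime.ringKrullDim_eq_height p, ← hc]
    rfl
  rw [← hc]
  norm_cast
  by_cases h0 : c = 0
  · have hbot : p = ⊥ := by
      rw [← Ideal.height_eq_zero_iff_eq_bot, ← hc, h0]; rfl
    rw [rank_of_inj φ hinj p hbot]
    lia
  · by_cases h1 : d ≤ c
    · lia
    · obtain ⟨s, hs, hs'⟩ := hGd p hpp c hdim (by lia) (by lia)
      have := rank_ge_of_gens φ π hsurj hker p s hs'
      lia

/-- Passing to `K[x]`, `K = Frac T`. -/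
def toK (k : Type) [Field k] (d n : ℕ) : B k d n →+* MvPolynomial (Fin d) (FractionRing (T k n)) :=
  (MvPolynomial.map (algebraMap (T k n) (FractionRing (T k n)))).comp
    (sumAlgEquiv k (Fin d) (Fin n)).toRingEquiv.toRingHom

theorem toK_inr (k : Type) [Field k] (d n : ℕ) (t : T k n) :
    toK k d n (rename Sum.inr t) = C (algebraMap _ _ t) := by
  have : (toK k d n).comp (rename Sum.inr : T k n →ₐ[k] B k d n).toRingHom =
    (C : _ →+* MvPolynomial (Fin d) (FractionRing (T k n))).comp (algebraMap _ _) := by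
    apply MvPolynomial.ringHom_ext
    · intro r; simp [toK]
    · intro i; simp [toK]
  exact DFunLike.congr_fun this t

theorem toK_Xinl (k : Type) [Field k] (d n : ℕ) (i : Fin d) :
    toK k d n (X (Sum.inl i)) = X i := by simp [toK]

theorem toK_Xinr (k : Type) [Field k] (d n : ℕ) (i : Fin n) :
    toK k d n (X (Sum.inr i)) = C (algebraMap (T k n) (FractionRing (T k n)) (X i)) := by simp [toK]

theorem toK_C (k : Type) [Field k] (d n : ℕ) (r : k) :
    toK k d n (C r) = C (algebraMap (T k n) (FractionRing (T k n)) (C r)) := by simp [toK]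

theorem toK_inl_monomial (k : Type) [Field k] (d n : ℕ) (s : Fin d →₀ ℕ) :
    toK k d n (rename Sum.inl (monomial s 1)) = monomial s 1 := by
  rw [monomial_eq, monomial_eq]
  simp only [Finsupp.prod, map_mul, map_prod, map_pow, rename_X, toK_Xinl, map_one]

theorem toK_homog (k : Type) [Field k] (d n j : ℕ) (g : B k d n)
    (hg : g.IsWeightedHomogeneous (wx d n) j) : (toK k d n g).IsHomogeneous j := by
  refine whomog_of_hom (wx d n) (1 : Fin d → ℕ) (toK k d n) ?_ ?_ g j hg
  · intro a
    rw [toK_C]; exact isHomogeneous_C _ _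
  · rintro (i | i)
    · rw [toK_Xinl]; exact isHomogeneous_X _ _
    · rw [toK_Xinr]; exact isHomogeneous_C _ _

theorem toK_mem_map (k : Type) [Field k] (d n : ℕ) (L : Ideal (B k d n)) (b : B k d n)
    (hb : toK k d n b ∈ L.map (toK k d n)) : ∃ t : T k n, t ≠ 0 ∧ rename Sum.inr t * b ∈ L := by
  let _ : Algebra (MvPolynomial (Fin d) (T k n)) (MvPolynomial (Fin d) (FractionRing (T k n))) :=
    algebraMvPolynomial
  let σ := (sumAlgEquiv k (Fin d) (Fin n)).toRingEquiv
  have h1 : L.map (toK k d n) = (L.map σ.toRingHom).map (algebraMap (MvPolynomial (Fin d) (T k n)) (MvPolynomial (Fin d) (FractionRing (T k n)))) := by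
    rw [Ideal.map_map]; rfl
  rw [h1, IsLocalization.mem_map_algebraMap_iff ((nonZeroDivisors (T k n)).map (C (σ := Fin d)))] at hb
  obtain ⟨⟨⟨y, hy⟩, ⟨_, ⟨t, ht, rfl⟩⟩⟩, h⟩ := hb
  refine ⟨t, nonZeroDivisors.ne_zero ht, ?_⟩
  have hinj : Function.Injective (algebraMap (MvPolynomial (Fin d) (T k n)) (MvPolynomial (Fin d) (FractionRing (T k n)))) :=
    MvPolynomial.map_injective _ (IsFractionRing.injective _ _)
  have h2 : σ b * C t = y := by
    apply hinj
    rw [map_mul]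
    exact h
  have h3 : σ (rename Sum.inr t * b) ∈ L.map σ.toRingHom := by
    have h4 : σ (rename Sum.inr t) = C t := by
      have : (σ.toRingHom).comp (rename Sum.inr : T k n →ₐ[k] B k d n).toRingHom = C := by
        apply MvPolynomial.ringHom_ext
        · intro r; simp [σ]
        · intro i; simp [σ]
      exact DFunLike.congr_fun this t
    rw [map_mul, h4, mul_comm, h2]
    exact hy
  have h5 := Ideal.mem_map_of_equiv σ (I := L) (σ (rename Sum.inr t * b))
  obtain ⟨z, hz, hz'⟩ := h5.1 h3
  rwa [σ.injective hz'] at hz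

theorem height_K (k : Type) [Field k] (d n : ℕ)
    (Q : Ideal (MvPolynomial (Fin d) (FractionRing (T k n)))) :
    (Q.comap (toK k d n)).height = Q.height := by
  let _ : Algebra (MvPolynomial (Fin d) (T k n)) (MvPolynomial (Fin d) (FractionRing (T k n))) :=
    algebraMvPolynomial
  rw [← IsLocalization.height_under ((nonZeroDivisors (T k n)).map (C (σ := Fin d))) Q,
    ← RingEquiv.height_comap (sumAlgEquiv k (Fin d) (Fin n)).toRingEquiv]
  rfl

theorem rel_K {F : Type*} [Field F] {d : ℕ} (f : Fin d → MvPolynomial (Fin d) F)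
    (hf : ∀ i, coeff 0 (f i) = 0)
    (hht : ∀ Q : Ideal (MvPolynomial (Fin d) F), Q.IsPrime → (∀ i, f i ∈ Q) → (d : ℕ∞) ≤ Q.height)
    (c : Fin d → MvPolynomial (Fin d) F) (hc : ∑ i, c i * f i = 0) (i : Fin d) :
    coeff 0 (c i) = 0 := by
  classical
  by_contra hne
  let J := Ideal.span (((Finset.univ.erase i).image f : Finset _) : Set (MvPolynomial (Fin d) F))
  have hfJ : ∀ j, j ≠ i → f j ∈ J := fun j hj =>
    Ideal.subset_span (by simp only [Finset.coe_image]; exact ⟨j, by simpa using hj, rfl⟩)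
  let 𝔪 := RingHom.ker (constantCoeff : MvPolynomial (Fin d) F →+* F)
  have h𝔪 : 𝔪.IsPrime := RingHom.ker_isPrime _
  have hJ𝔪 : J ≤ 𝔪 := by
    rw [Ideal.span_le]
    intro x hx
    simp only [Finset.coe_image] at hx
    obtain ⟨j, -, rfl⟩ := hx
    exact hf j
  obtain ⟨Q, hQ, hQ𝔪⟩ := Ideal.exists_minimalPrimes_le hJ𝔪
  have hQp : Q.IsPrime := hQ.1.1
  have hJQ : J ≤ Q := hQ.1.2
  have h1 := Ideal.height_le_card_of_mem_minimalPrimes_span_finset hQ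
  have hcard : ((Finset.univ.erase i).image f).card ≤ d - 1 := by
    refine Finset.card_image_le.trans ?_
    simp
  have hci : c i * f i ∈ Q := by
    rw [← Finset.add_sum_erase _ _ (Finset.mem_univ i)] at hc
    rw [eq_neg_of_add_eq_zero_left hc]
    refine Q.neg_mem (Q.sum_mem fun j hj => Q.mul_mem_left _ (hJQ (hfJ j ?_)))
    exact Finset.ne_of_mem_erase hj
  have hfi : f i ∈ Q := by
    rcases hQp.mem_or_mem hci with h | h
    · exact absurd (hQ𝔪 h) hne
    · exact h
  have h2 := hht Q hQp (fun j => by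
    by_cases hj : j = i
    · rw [hj]; exact hfi
    · exact hJQ (hfJ j hj))
  have h3 := h2.trans h1
  have h4 : d ≤ ((Finset.univ.erase i).image f).card := by exact_mod_cast h3
  have := i.2
  lia

theorem SxDeg_rank (k : Type) [Field k] (d n : ℕ) (L : Ideal (B k d n)) (j : ℕ) :
    Module.rank (T k n) (SxDeg k d n L j) = Module.rank (FractionRing (T k n))
      ((homogeneousSubmodule (Fin d) (FractionRing (T k n)) j).map
      (Ideal.Quotient.mkₐ (FractionRing (T k n)) (L.map (toK k d n))).toLinearMap) := by
  classical
  let F0 : (B k d n ⧸ L) →+* (MvPolynomial (Fin d) (FractionRing (T k n)) ⧸ L.map (toK k d n)) :=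
    Ideal.quotientMap _ (toK k d n) Ideal.le_comap_map
  have hF0 : ∀ b, F0 (Ideal.Quotient.mk L b) = Ideal.Quotient.mk _ (toK k d n b) := fun b => rfl
  have hsm : ∀ (t : T k n) (b : B k d n), t • Ideal.Quotient.mk L b = Ideal.Quotient.mk L (rename Sum.inr t * b) := fun t b => rfl
  have hF0s : ∀ (t : T k n) (x : B k d n ⧸ L),
      F0 (t • x) = algebraMap (T k n) (FractionRing (T k n)) t • F0 x := by
    intro t x
    obtain ⟨b, rfl⟩ := Ideal.Quotient.mk_surjective x
    rw [hsm, hF0, hF0, map_mul, toK_inr, ← smul_eq_C_mul]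
    rfl
  let f : SxDeg k d n L j →+ (MvPolynomial (Fin d) (FractionRing (T k n)) ⧸ L.map (toK k d n)) :=
    F0.toAddMonoidHom.comp (SxDeg k d n L j).subtype.toAddMonoidHom
  refine rank_aux2 (K := FractionRing (T k n)) f (fun t x => hF0s t x) ?_ _ ?_
  · rintro ⟨x, hx⟩ h
    obtain ⟨b, rfl⟩ := Ideal.Quotient.mk_surjective x
    change F0 (Ideal.Quotient.mk L b) = 0 at h
    rw [hF0, Ideal.Quotient.eq_zero_iff_mem] at h
    obtain ⟨t, ht, h⟩ := toK_mem_map k d n L b h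
    refine ⟨t, ht, Subtype.ext ?_⟩
    change t • Ideal.Quotient.mk L b = 0
    rw [hsm, Ideal.Quotient.eq_zero_iff_mem]
    exact h
  · apply le_antisymm
    · rw [Submodule.span_le]
      rintro _ ⟨⟨x, hx⟩, rfl⟩
      change F0 x ∈ _
      induction hx using Submodule.span_induction with
      | mem x hx =>
        obtain ⟨g, hg, rfl⟩ := hx
        exact ⟨toK k d n g, toK_homog k d n j g hg, rfl⟩
      | zero => rw [map_zero]; exact Submodule.zero_mem _
      | add x y _ _ hx hy => rw [map_add]; exact Submodule.add_mem _ hx hy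
      | smul t x hx' hx =>
        rw [hF0s]
        exact Submodule.smul_mem _ _ hx
    · rintro _ ⟨p, hp, rfl⟩
      rw [← p.support_sum_monomial_coeff, map_sum]
      refine Submodule.sum_mem _ fun s hs => ?_
      have hm : monomial s (coeff s p) = coeff s p • monomial s (1 : FractionRing (T k n)) := by
        simp [smul_monomial]
      rw [hm, map_smul]
      refine Submodule.smul_mem _ _ (Submodule.subset_span ?_)
      have hsd : s.degree = j := IsHomogeneous.degree_eq_sum_deg_support hp hs |>.symm
      have hmem : (rename Sum.inl (monomial s 1) : B k d n).IsWeightedHomogeneous (wx d n) j := by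
        refine whomog_of_hom (1 : Fin d → ℕ) (wx d n) (rename Sum.inl : MvPolynomial (Fin d) k →ₐ[k] B k d n).toRingHom ?_ ?_ _ j (isHomogeneous_monomial 1 hsd)
        · intro a
          simpa using isWeightedHomogeneous_C (wx d n) a
        · intro i
          simpa using! isWeightedHomogeneous_X k (wx d n) (Sum.inl i)
      refine ⟨⟨_, Submodule.subset_span ⟨_, hmem, rfl⟩⟩, ?_⟩
      change F0 (Ideal.Quotient.mk L _) = _
      rw [hF0, toK_inl_monomial]
      rfl

theorem SxDeg_zero (k : Type) [Field k] (d n : ℕ) (L : Ideal (B k d n))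
    (hL : ∀ x ∈ L, aeval (Sum.elim 0 X : Fin d ⊕ Fin n → T k n) x = 0) :
    Nonempty ((SxDeg k d n L 0) ≃ₗ[T k n] T k n) := by
  classical
  have hsm : ∀ (t : T k n) (b : B k d n), t • Ideal.Quotient.mk L b = Ideal.Quotient.mk L (rename Sum.inr t * b) := fun t b => rfl
  have h1 : Ideal.Quotient.mk L 1 ∈ SxDeg k d n L 0 :=
    Submodule.subset_span ⟨1, isWeightedHomogeneous_one k _, rfl⟩
  let f := LinearMap.toSpanSingleton (T k n) (SxDeg k d n L 0) ⟨_, h1⟩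
  refine ⟨(LinearEquiv.ofBijective f ⟨?_, ?_⟩).symm⟩
  · rw [injective_iff_map_eq_zero]
    intro t ht
    have h2 := congrArg Subtype.val ht
    change t • Ideal.Quotient.mk L 1 = 0 at h2
    rw [hsm, mul_one, Ideal.Quotient.eq_zero_iff_mem] at h2
    have h3 := hL _ h2
    rw [aeval_rename] at h3
    simpa [Function.comp_def] using! h3
  · rintro ⟨x, hx⟩
    have : SxDeg k d n L 0 ≤ Submodule.span (T k n) {Ideal.Quotient.mk L 1} := by
      refine Submodule.span_le.2 ?_
      rintro _ ⟨g, hg, rfl⟩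
      have hvars : (g.vars : Set (Fin d ⊕ Fin n)) ⊆ Set.range Sum.inr := by
        rintro (i | i) hi
        · exfalso
          rw [Finset.mem_coe, mem_vars_iff_mem_support] at hi
          obtain ⟨s, hs, hi⟩ := hi
          have hw : Finsupp.weight (wx d n) s = 0 := hg (mem_support_iff.1 hs)
          rw [Finsupp.weight_apply, Finsupp.sum, Finset.sum_eq_zero_iff] at hw
          have := hw _ hi
          simp [wx] at this
          simp [this] at hi
        · exact ⟨i, rfl⟩
      obtain ⟨t, rfl⟩ := exists_rename_eq_of_vars_subset_range g Sum.inr Sum.inr_injective hvars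
      rw [SetLike.mem_coe, Submodule.mem_span_singleton]
      exact ⟨t, by rw [hsm, mul_one]⟩
    obtain ⟨t, ht⟩ := Submodule.mem_span_singleton.1 (this hx)
    exact ⟨t, Subtype.ext ht⟩

theorem ell_whomog {k M : Type} [Field k] [AddCommMonoid M] {d n : ℕ} (w : Fin d ⊕ Fin n → M) (a b : M)
    (ha : ∀ i, w (Sum.inl i) = a) (hb : ∀ i, w (Sum.inr i) = b) (m : ℕ)
    (c : Fin n → MvPolynomial (Fin d) k) (hc : ∀ j, (c j).IsHomogeneous m) :
    (∑ j, (rename Sum.inl (c j)) * X (Sum.inr j) : B k d n).IsWeightedHomogeneous w (m • a + b) := by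
  refine (weightedHomogeneousSubmodule k w _).sum_mem fun j _ => ?_
  refine IsWeightedHomogeneous.mul ?_ (by rw [← hb j]; exact isWeightedHomogeneous_X k w _)
  have h : (c j).IsWeightedHomogeneous (fun _ : Fin d => a) (m • a) := by
    intro s hs
    have h1 := hc j hs
    rw [Finsupp.weight_apply, Finsupp.sum] at h1 ⊢
    rw [← h1, ← Finset.sum_smul]
    simp
  refine whomog_of_hom (fun _ : Fin d => a) w
    (rename Sum.inl : MvPolynomial (Fin d) k →ₐ[k] B k d n).toRingHom ?_ ?_ _ _ h
  · intro r
    simpa using isWeightedHomogeneous_C w r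
  · intro i
    rw [← ha i]
    simpa using! isWeightedHomogeneous_X k w (Sum.inl i)

theorem strand_ranks
    (d e : ℕ) (hd : 3 ≤ d)
    (E : Type) [AddCommGroup E] [Module (MvPolynomial (Fin d) k) E]
    [Module.Finite (MvPolynomial (Fin d) k) E]
    -- `E` is torsion-free
    (htf : Submodule.torsion (MvPolynomial (Fin d) k) E = ⊥)
    -- `0 → R^d →φ R^{d+e} →π E → 0` is a (minimal) free resolution, so `pd E = 1`,
    -- `rank E = e`
    (φ : Matrix (Fin (d + e)) (Fin d) (MvPolynomial (Fin d) k))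
    (hinj : Function.Injective φ.mulVecLin)
    (π : (Fin (d + e) → MvPolynomial (Fin d) k) →ₗ[MvPolynomial (Fin d) k] E)
    (hsurj : Function.Surjective π)
    (hker : LinearMap.ker π = LinearMap.range φ.mulVecLin)
    -- `φ = [φ′ | φ″]`: the first `d−2` columns are linear, the last two are quadrics
    (hdeg : ∀ (i : Fin (d + e)) (j : Fin d),
      ((j : ℕ) < d - 2 → φ i j ∈ homogeneousSubmodule (Fin d) k 1) ∧
      (d - 2 ≤ (j : ℕ) → φ i j ∈ homogeneousSubmodule (Fin d) k 2))
    -- `I_1(φ) = (x_1,…,x_d)`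
    (hI1 : Ideal.span {r : MvPolynomial (Fin d) k | ∃ i j, φ i j = r} =
      Ideal.span (Set.range X))
    -- `E` is minimally generated by `μ(E) = d+e` elements
    (hμ : ∀ s : Finset E, Submodule.span (MvPolynomial (Fin d) k) (s : Set E) = ⊤ →
      d + e ≤ s.card)
    -- `E` satisfies `G_d`
    (hGd : ∀ (p : Ideal (MvPolynomial (Fin d) k)) (_ : p.IsPrime) (c : ℕ),
      ringKrullDim (Localization.AtPrime p) = (c : WithBot ℕ∞) → 1 ≤ c → c ≤ d - 1 →
      ∃ s : Finset (LocalizedModule p.primeCompl E), s.card ≤ c + e - 1 ∧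
        Submodule.span (Localization.AtPrime p)
          (s : Set (LocalizedModule p.primeCompl E)) = ⊤)
    -- the defining ideal `L` of the symmetric algebra: `[ℓ_1 … ℓ_d] = [y_1 … y_{d+e}]·φ`
    (ℓ : Fin d → B k d (d + e))
    (hℓ : ∀ i, ℓ i = ∑ j, (rename Sum.inl (φ j i)) * X (Sum.inr j))
    (L : Ideal (B k d (d + e))) (hL : L = Ideal.span (Set.range ℓ)) :
    -- `δ = 2` and `τ = d` for the bidegrees of the regular sequence `ℓ_1,…,ℓ_d`
    (∀ α β : Fin d → ℕ,
      (∀ i, ℓ i ≠ 0 ∧ ℓ i ∈ weightedHomogeneousSubmodule k (bwt d (d + e)) (α i, β i)) →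
      (∑ i, α i) = d + 2 ∧ (∑ i, β i) = d) ∧
    -- `S(E)_0` is free of rank one over `T`
    Nonempty ((SxDeg k d (d + e) L 0) ≃ₗ[T k (d + e)] T k (d + e)) ∧
    -- `rank_T S(E)_1 = 2`
    Module.rank (T k (d + e)) (SxDeg k d (d + e) L 1) = 2 ∧
    -- `rank_T S(E)_2 = 1`
    Module.rank (T k (d + e)) (SxDeg k d (d + e) L 2) = 1 := by
  classical
  obtain ⟨m, rfl⟩ : ∃ m, d = m + 2 := ⟨d - 2, by lia⟩
  let dg : Fin (m + 2) → ℕ := fun i => if (i : ℕ) < m then 1 else 2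
  have hφ : ∀ i j, (φ i j).IsHomogeneous (dg j) := by
    intro i j
    by_cases h : (j : ℕ) < m
    · have := (hdeg i j).1 (by lia)
      simp only [dg, h, if_true]
      exact this
    · have := (hdeg i j).2 (by lia)
      simp only [dg, h, if_false]
      exact this
  have hdg1 : ∀ i : Fin m, dg (Fin.castAdd 2 i) = 1 := by intro i; simp [dg]
  have hdg2 : ∀ i : Fin 2, dg (Fin.natAdd m i) = 2 := by intro i; simp [dg]
  have hdpos : ∀ i, dg i ≠ 0 := by
    intro i
    simp only [dg]
    split_ifs <;> simp
  have hx : ∀ i, (ℓ i).IsWeightedHomogeneous (wx (m + 2) (m + 2 + e)) (dg i) := by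
    intro i
    rw [hℓ]
    have := ell_whomog (wx (m + 2) (m + 2 + e)) 1 0 (fun _ => rfl) (fun _ => rfl) (dg i)
      (fun j => φ j i) (fun j => hφ j i)
    simpa using this
  have hb : ∀ i, (ℓ i).IsWeightedHomogeneous (bwt (m + 2) (m + 2 + e)) (dg i, 1) := by
    intro i
    rw [hℓ]
    have := ell_whomog (bwt (m + 2) (m + 2 + e)) (1, 0) (0, 1) (fun _ => rfl) (fun _ => rfl) (dg i)
      (fun j => φ j i) (fun j => hφ j i)
    simpa using this
  have hK : ∀ i, (toK k (m + 2) (m + 2 + e) (ℓ i)).IsHomogeneous (dg i) := fun i =>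
    toK_homog k _ _ _ _ (hx i)
  have hmap : L.map (toK k (m + 2) (m + 2 + e)) = Ideal.span
      (Set.range (fun i : Fin m => toK k (m + 2) (m + 2 + e) (ℓ (Fin.castAdd 2 i))) ∪
        Set.range (fun i : Fin 2 => toK k (m + 2) (m + 2 + e) (ℓ (Fin.natAdd m i)))) := by
    rw [hL, Ideal.map_span]
    congr 1
    ext x
    constructor
    · rintro ⟨_, ⟨i, rfl⟩, rfl⟩
      induction i using Fin.addCases with
      | left i => exact Or.inl ⟨i, rfl⟩
      | right i => exact Or.inr ⟨i, rfl⟩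
    · rintro (⟨i, rfl⟩ | ⟨i, rfl⟩)
      · exact ⟨_, ⟨_, rfl⟩, rfl⟩
      · exact ⟨_, ⟨_, rfl⟩, rfl⟩
  have hrel := rel_K (fun i => toK k (m + 2) (m + 2 + e) (ℓ i))
    (fun i => (hK i).coeff_eq_zero (by simpa using (hdpos i).symm))
    (by
      intro Q hQ hmem
      have hP : (Q.comap (toK k (m + 2) (m + 2 + e))).IsPrime := Ideal.IsPrime.comap _
      rw [← height_K]
      refine height_ge_B k (m + 2) e E φ hinj π hsurj hker hGd _ ?_
      intro i
      rw [← hℓ i]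
      exact hmem i)
  have hfp := field_problem (F := FractionRing (T k (m + 2 + e))) (m := m) (d := m + 2) rfl
    (fun i : Fin m => toK k (m + 2) (m + 2 + e) (ℓ (Fin.castAdd 2 i)))
    (fun i : Fin 2 => toK k (m + 2) (m + 2 + e) (ℓ (Fin.natAdd m i)))
    (fun i => by have := hK (Fin.castAdd 2 i); rwa [hdg1] at this)
    (fun i => by have := hK (Fin.natAdd m i); rwa [hdg2] at this)
    (by
      intro c c' h
      have h1 := hrel (Fin.addCases c c') (by
        rw [Fin.sum_univ_add]
        simpa only [Fin.addCases_left, Fin.addCases_right] using h)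
      constructor
      · intro i
        simpa only [Fin.addCases_left] using h1 (Fin.castAdd 2 i)
      · intro i
        simpa only [Fin.addCases_right] using h1 (Fin.natAdd m i))
    _ hmap
  refine ⟨?_, ?_, ?_, ?_⟩
  · intro α β h
    have h1 : ∀ i, α i = dg i ∧ β i = 1 := by
      intro i
      have := IsWeightedHomogeneous.inj_right (h i).1 (h i).2 (hb i)
      exact Prod.mk.inj this
    constructor
    · rw [Finset.sum_congr rfl fun i _ => (h1 i).1, Fin.sum_univ_add]
      simp [hdg1, hdg2]
    · rw [Finset.sum_congr rfl fun i _ => (h1 i).2]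
      simp
  · refine SxDeg_zero k (m + 2) (m + 2 + e) L ?_
    intro x hxL
    have hle : L ≤ RingHom.ker (aeval (Sum.elim 0 X : Fin (m + 2) ⊕ Fin (m + 2 + e) →
        T k (m + 2 + e)) : B k (m + 2) (m + 2 + e) →ₐ[k] T k (m + 2 + e)) := by
      rw [hL, Ideal.span_le]
      rintro _ ⟨i, rfl⟩
      rw [SetLike.mem_coe, RingHom.mem_ker, hℓ, map_sum]
      refine Finset.sum_eq_zero fun j _ => ?_
      rw [map_mul, aeval_rename]
      have h0 : aeval ((Sum.elim 0 X : Fin (m + 2) ⊕ Fin (m + 2 + e) → T k (m + 2 + e)) ∘ Sum.inl)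
          (φ j i) = 0 := by
        have h2 : ((Sum.elim 0 X : Fin (m + 2) ⊕ Fin (m + 2 + e) → T k (m + 2 + e)) ∘ Sum.inl) =
          (fun _ => 0) := rfl
        have h3 : constantCoeff (φ j i) = 0 :=
          (hφ j i).coeff_eq_zero (by simpa using (hdpos i).symm)
        rw [h2, aeval_zero', h3, map_zero]
      rw [h0, zero_mul]
    exact hle hxL
  · rw [SxDeg_rank]
    exact (Module.rank_eq_ofNat_iff_finrank_eq_ofNat 2).2 hfp.1
  · rw [SxDeg_rank]
    exact Module.rank_eq_one_iff_finrank_eq_one.2 hfp.2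

end Stmt7
end
end

section
/- Let R = k[x_1,…,x_d] with d ≥ 3 and let E be a torsion-free R-module of rank e and projective dimension one with μ(E) = d+e, minimal free resolution 0 → R^d →φ R^{d+e} → E → 0 where φ = [φ′ | φ″] with φ′ having d−2 columns of linear forms and φ″ two columns of quadrics, I_1(φ) = (x_1,…,x_d), and E satisfying G_d. Let σ = B(φ′) be the d×(d−2) Jacobian dual of φ′, i.e. the matrix of linear forms in T = k[y_1,…,y_{d+e}] with [y_1 … y_{d+e}]·φ′ = [x_1 … x_d]·σ. Then ht I(σ) ≥ 2, where I(σ) = I_{d−2}(σ) is the ideal of rank-sized minors of σ. -/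
/-!
STATEMENT 8: With `R`, `E`, `φ = [φ′ | φ″]` as in Statement 7, let `σ = B(φ′)` be the
`d×(d−2)` Jacobian dual of `φ′`: the matrix of linear forms in `T` with
`[y_1 … y_{d+e}]·φ′ = [x_1 … x_d]·σ`.  Then `ht I(σ) ≥ 2`, where `I(σ) = I_{d−2}(σ)`.
-/

open MvPolynomial

noncomputable section

namespace Stmt8

variable (k : Type) [Field k] (d n : ℕ)

/-- `B = R ⊗_k T = k[x_1,…,x_d,y_1,…,y_n]`. -/
abbrev B := MvPolynomial (Fin d ⊕ Fin n) k

/-- `T = k[y_1,…,y_n]`. -/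
abbrev T := MvPolynomial (Fin n) k

/-- `B` is a `T`-algebra via `y_j ↦ y_j`. -/
instance : Algebra (T k n) (B k d n) :=
  ((rename Sum.inr : T k n →ₐ[k] B k d n).toRingHom).toAlgebra

/-- The bigrading weight: `bideg x_i = (1,0)`, `bideg y_j = (0,1)`. -/
def bwt : (Fin d ⊕ Fin n) → ℕ × ℕ := Sum.elim (fun _ => (1, 0)) (fun _ => (0, 1))

/-- The `x`-degree weight. -/
def wx : (Fin d ⊕ Fin n) → ℕ := Sum.elim (fun _ => 1) (fun _ => 0)

/-- The ideal `m = (x_1,…,x_d)B`. -/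
def mxB : Ideal (B k d n) := Ideal.span (Set.range fun i : Fin d => (X (Sum.inl i) : B k d n))

variable (I : Ideal (B k d n))

/-- `A = H⁰_m(S)`: elements of `S = B/I` annihilated by a power of `m`. -/
def H0 : Submodule (B k d n) (B k d n ⧸ I) :=
  ⨆ N : ℕ, Submodule.torsionBySet (B k d n) (B k d n ⧸ I)
    ((mxB k d n ^ N : Ideal (B k d n)) : Set (B k d n))

/-- The bigraded component of `S = B/I` in bidegree `p`. -/
def Scomp (p : ℕ × ℕ) : Submodule k (B k d n ⧸ I) :=
  (weightedHomogeneousSubmodule k (bwt d n) p).map (Ideal.Quotient.mkₐ k I).toLinearMap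

/-- The graded strand `S_j = ⊕_b S_{(j,b)}` of `S` in `x`-degree `j`, as a `T`-module. -/
def SxDeg (j : ℕ) : Submodule (T k n) (B k d n ⧸ I) :=
  Submodule.span (T k n) ((Ideal.Quotient.mk I) '' {g : B k d n | g.IsWeightedHomogeneous (wx d n) j})

/-- The graded strand of `S` in (possibly negative) `x`-degree `i : ℤ`. -/
def SxDegZ (i : ℤ) : Submodule (T k n) (B k d n ⧸ I) :=
  if 0 ≤ i then SxDeg k d n I i.toNat else ⊥

/-- The graded strand `A_i = ⊕_b A_{(i,b)}` of `A = H⁰_m(S)`, as a `T`-module. -/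
def AcompZ (i : ℤ) : Submodule (T k n) (B k d n ⧸ I) :=
  (H0 k d n I).restrictScalars (T k n) ⊓ SxDegZ k d n I i

/-- The graded component of `T` in (possibly negative) degree `j`. -/
def TcompZ (j : ℤ) : Submodule k (T k n) :=
  if 0 ≤ j then homogeneousSubmodule (Fin n) k j.toNat else ⊥

/-- The ideal of `t × t` minors of a matrix. -/
def minorsIdeal {R : Type} [CommRing R] {m' n' : Type} (M : Matrix m' n' R) (t : ℕ) :
    Ideal R :=
  Ideal.span {x | ∃ (f : Fin t → m') (g : Fin t → n'), x = (M.submatrix f g).det}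

/-- `ht I ≥ c`: every prime containing `I` has height (= dimension of the localization)
at least `c`. -/
def htGE {R : Type} [CommRing R] (I : Ideal R) (c : ℕ) : Prop :=
  ∀ (p : Ideal R) (_ : p.IsPrime), I ≤ p →
    (c : WithBot ℕ∞) ≤ ringKrullDim (Localization.AtPrime p)


theorem trdeg_lt_of_surj {k A C : Type} [Field k] [CommRing A] [IsDomain A] [CommRing C] [IsDomain C]
    [Algebra k A] [Algebra k C] (g : A →ₐ[k] C) (hg : Function.Surjective g)
    (hfin : Algebra.trdeg k A < Cardinal.aleph0)
    (a : A) (ha : a ≠ 0) (hga : g a = 0) : Algebra.trdeg k C < Algebra.trdeg k A := by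
  by_contra hcon
  push Not at hcon
  obtain ⟨ι, x, hx⟩ := exists_isTranscendenceBasis' k C
  choose z hz using fun i => hg (x i)
  have hzi : AlgebraicIndependent k z := by
    apply AlgebraicIndependent.of_comp g
    have : g ∘ z = x := funext hz
    rw [this]; exact hx.1
  rw [← hx.cardinalMk_eq_trdeg] at hcon
  have hzb := hzi.isTranscendenceBasis_of_trdeg_le hfin hcon
  have halg := hzb.isAlgebraic
  obtain ⟨r, hr0, hr⟩ := (halg.1 a).exists_nonzero_dvd (mem_nonZeroDivisors_of_ne_zero ha)
  obtain ⟨r, hrm⟩ := r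
  rw [Algebra.adjoin_range_eq_range_aeval] at hrm
  obtain ⟨P, rfl⟩ := hrm
  have h1 : g (aeval z P) = 0 := by
    obtain ⟨w, hw⟩ := hr
    change aeval z P = _ at hw
    rw [hw, map_mul, hga, zero_mul]
  have h2 : aeval x P = 0 := by
    rw [← h1, ← AlgHom.comp_apply, comp_aeval]
    congr 2
    funext i; exact (hz i).symm
  have : P = 0 := hx.1 (by rw [h2, map_zero])
  apply hr0
  ext
  simp [this]

theorem trdeg_quot_strict {k : Type} [Field k] {d : ℕ} (q p : Ideal (MvPolynomial (Fin d) k))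
    [q.IsPrime] [p.IsPrime] (h : q < p) : ∃ a b : ℕ, b < a ∧
      Algebra.trdeg k (MvPolynomial (Fin d) k ⧸ q) = a ∧
      Algebra.trdeg k (MvPolynomial (Fin d) k ⧸ p) = b ∧ a ≤ d := by
  have hq : Algebra.trdeg k (MvPolynomial (Fin d) k ⧸ q) ≤ d := by
    have := trdeg_le_of_surjective (Ideal.Quotient.mkₐ k q) (Ideal.Quotient.mkₐ_surjective k q)
    simpa using this
  obtain ⟨z, hzp, hzq⟩ := Set.exists_of_ssubset h
  have hlt := trdeg_lt_of_surj (Ideal.Quotient.factorₐ k h.le) (Ideal.Quotient.factor_surjective h.le)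
    (hq.trans_lt (Cardinal.natCast_lt_aleph0)) (Ideal.Quotient.mk q z)
    (by rwa [Ne, Ideal.Quotient.eq_zero_iff_mem])
    (by simpa [Ideal.Quotient.eq_zero_iff_mem] using hzp)
  obtain ⟨a, ha⟩ := Cardinal.lt_aleph0.1 (hq.trans_lt (Cardinal.natCast_lt_aleph0))
  obtain ⟨b, hb⟩ := Cardinal.lt_aleph0.1 (hlt.trans (hq.trans_lt (Cardinal.natCast_lt_aleph0)))
  rw [ha, hb] at hlt
  rw [ha] at hq
  exact ⟨a, b, by exact_mod_cast hlt, ha, hb, by exact_mod_cast hq⟩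

theorem height_add_trdeg {k : Type} [Field k] {d : ℕ} (m : ℕ) :
    ∀ (p : Ideal (MvPolynomial (Fin d) k)) [p.IsPrime],
    (d : Cardinal) ≤ Algebra.trdeg k (MvPolynomial (Fin d) k ⧸ p) + m → p.height ≤ m := by
  induction m with
  | zero =>
    intro p _ h
    rw [Ideal.height_le_iff]
    intro q hq hqp
    exfalso
    obtain ⟨a, b, hlt, ha, hb, had⟩ := trdeg_quot_strict q p hqp
    rw [hb] at h
    have : d ≤ b := by exact_mod_cast (by simpa using h)
    omega
  | succ m ih =>
    intro p _ h
    rw [Ideal.height_le_iff]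
    intro q hq hqp
    obtain ⟨a, b, hlt, ha, hb, had⟩ := trdeg_quot_strict q p hqp
    rw [hb] at h
    have h' : d ≤ b + (m + 1) := by exact_mod_cast h
    have := ih q (by rw [ha]; exact_mod_cast (by omega))
    refine this.trans_lt ?_
    exact_mod_cast Nat.lt_succ_self m

theorem trdeg_quot_prime {k : Type} [Field k] {n : ℕ} (f : MvPolynomial (Fin n) k) (hf : Prime f) :
    (n : Cardinal) ≤ Algebra.trdeg k (MvPolynomial (Fin n) k ⧸ Ideal.span {f}) + 1 := by
  have hv : f.vars.Nonempty := by
    rw [Finset.nonempty_iff_ne_empty]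
    intro h
    rw [vars_eq_empty_iff_eq_C] at h
    have h0 : f.coeff 0 ≠ 0 := by
      intro h0
      rw [h0, map_zero] at h
      exact hf.ne_zero h
    apply hf.not_isUnit
    rw [h]
    exact (isUnit_iff_ne_zero.2 h0).map C
  obtain ⟨i, hi⟩ := hv
  have : AlgebraicIndependent k (fun j : {j : Fin n // j ≠ i} =>
      Ideal.Quotient.mkₐ k (Ideal.span {f}) (X j.1)) := by
    rw [AlgebraicIndependent, injective_iff_map_eq_zero]
    intro g hg
    have h1 : aeval (fun j : {j : Fin n // j ≠ i} =>
      Ideal.Quotient.mkₐ k (Ideal.span {f}) (X j.1)) g = Ideal.Quotient.mk (Ideal.span {f}) (rename (fun j : {j : Fin n // j ≠ i} => j.1) g) := by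
      rw [← Ideal.Quotient.mkₐ_eq_mk k, ← AlgHom.comp_apply]
      congr 1
      ext j
      simp
    rw [h1, Ideal.Quotient.eq_zero_iff_dvd] at hg
    obtain ⟨w, hw⟩ := hg
    by_contra hg0
    have hne : rename (fun j : {j : Fin n // j ≠ i} => j.1) g ≠ 0 := by
      intro h
      exact hg0 (rename_injective _ Subtype.val_injective (by rw [h, map_zero]))
    have hd : degreeOf i (rename (fun j : {j : Fin n // j ≠ i} => j.1) g) = 0 := by
      by_contra hcon
      rw [← ne_eq, ← mem_vars_iff_degreeOf_ne_zero] at hcon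
      obtain ⟨j, hj, hji⟩ := mem_vars_rename _ _ hcon
      exact j.2 hji
    rw [hw] at hne hd
    rw [degreeOf_mul_eq (left_ne_zero_of_mul hne) (right_ne_zero_of_mul hne)] at hd
    have : degreeOf i f = 0 := by omega
    exact (mem_vars_iff_degreeOf_ne_zero.1 hi) this
  have h2 := this.cardinalMk_le_trdeg
  refine le_trans ?_ (add_le_add_left h2 1)
  rw [Cardinal.mk_fintype, Fintype.card_subtype_compl, Fintype.card_fin, Fintype.card_subtype_eq]
  exact_mod_cast (by omega)

theorem rank_lt_of_minors {K : Type} [Field K] {d r : ℕ} (M : Matrix (Fin d) (Fin r) K)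
    (h : ∀ f : Fin r → Fin d, (M.submatrix f id).det = 0) : M.rank < r := by
  by_contra hcon
  push Not at hcon
  have h1 := M.rank_eq_finrank_span_row
  have h2 := M.rank_le_width
  obtain ⟨κ, a, ha, hsp, hli⟩ := exists_linearIndependent' K M.row
  have : Fintype κ := Fintype.ofInjective a ha
  have h3 : Fintype.card κ = r := by
    rw [← finrank_span_eq_card hli, hsp, ← h1]; omega
  let e := Fintype.equivFinOfCardEq h3
  have hli2 : LinearIndependent K (M.submatrix (a ∘ e.symm) id).row :=
    hli.comp e.symm e.symm.injective
  rw [Matrix.linearIndependent_rows_iff_isUnit, Matrix.isUnit_iff_isUnit_det] at hli2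
  exact hli2.ne_zero (h _)

theorem exists_coeffs {F L : Type} [Field F] [Field L] [Algebra F L] {n q r : ℕ}
    (A : Matrix (Fin n) (Fin q) F)
    (N : Module.Basis (Fin r) F (LinearMap.ker A.vecMulLinear))
    (y : Fin n → L) (hy : ∀ i, ∑ j, algebraMap F L (A j i) * y j = 0) :
    ∃ b : Fin r → L, ∀ j, y j = ∑ s, algebraMap F L ((N s : Fin n → F) j) * b s := by
  classical
  let β := Module.Basis.ofVectorSpace F L
  let v : Module.Basis.ofVectorSpaceIndex F L → LinearMap.ker A.vecMulLinear := fun u =>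
    ⟨fun j => β.repr (y j) u, by
      rw [LinearMap.mem_ker]
      ext i
      have h := congrArg (fun z => β.repr z u) (hy i)
      simp only [← Algebra.smul_def, map_sum, map_smul, Finsupp.coe_finsetSum, Finset.sum_apply,
        Finsupp.smul_apply, map_zero, Finsupp.coe_zero, Pi.zero_apply, smul_eq_mul] at h
      simp only [Matrix.vecMulLinear_apply, Matrix.vecMul, dotProduct, Pi.zero_apply]
      rw [← h]
      exact Finset.sum_congr rfl fun j _ => mul_comm _ _⟩
  let U : Finset (Module.Basis.ofVectorSpaceIndex F L) :=
    Finset.univ.biUnion fun j => (β.repr (y j)).support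
  refine ⟨fun s => ∑ u ∈ U, N.repr (v u) s • β u, fun j => ?_⟩
  have h1 : y j = ∑ u ∈ U, (β.repr (y j) u) • β u := by
    conv_lhs => rw [← β.linearCombination_repr (y j), Finsupp.linearCombination_apply]
    apply Finsupp.sum_of_support_subset
    · exact Finset.subset_biUnion_of_mem (fun j => (β.repr (y j)).support) (Finset.mem_univ j)
    · simp
  have h2 : ∀ u, β.repr (y j) u = ∑ s, N.repr (v u) s * (N s : Fin n → F) j := by
    intro u
    have := congrArg (fun z : LinearMap.ker A.vecMulLinear => (z : Fin n → F) j) (N.sum_repr (v u))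
    simp only [Submodule.coe_sum, Submodule.coe_smul, Finset.sum_apply, Pi.smul_apply,
      smul_eq_mul] at this
    exact this.symm
  rw [h1]
  simp_rw [h2, Finset.sum_smul, Finset.mul_sum, ← Algebra.smul_def]
  rw [Finset.sum_comm]
  refine Finset.sum_congr rfl fun s _ => Finset.sum_congr rfl fun u _ => ?_
  rw [smul_smul, mul_comm]

theorem finrank_ker_drop {F : Type} [Field F] {n d : ℕ} (hd : 2 ≤ d)
    (A : Matrix (Fin n) (Fin d) F) :
    Module.finrank F (LinearMap.ker
      (A.submatrix id (Fin.castLE (Nat.sub_le d 2))).vecMulLinear) ≤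
    Module.finrank F (LinearMap.ker A.vecMulLinear) + 2 := by
  set V' := LinearMap.ker (A.submatrix id (Fin.castLE (Nat.sub_le d 2))).vecMulLinear with hV'
  let c1 : Fin d := ⟨d - 2, by omega⟩
  let c2 : Fin d := ⟨d - 1, by omega⟩
  let g : V' →ₗ[F] (Fin 2 → F) :=
    (LinearMap.pi ![(LinearMap.proj c1).comp A.vecMulLinear,
      (LinearMap.proj c2).comp A.vecMulLinear]).comp V'.subtype
  have h1 := g.finrank_range_add_finrank_ker
  have h2 : Module.finrank F (LinearMap.range g) ≤ 2 := by
    simpa using (LinearMap.range g).finrank_le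
  have h3 : Module.finrank F (LinearMap.ker g) ≤ Module.finrank F (LinearMap.ker A.vecMulLinear) := by
    have hmem : ∀ z : LinearMap.ker g, (z : V').1 ∈ LinearMap.ker A.vecMulLinear := by
      intro z
      have hz := z.2
      rw [LinearMap.mem_ker] at hz
      have hz1 := congrFun hz 0
      have hz2 := congrFun hz 1
      have hv : (A.submatrix id (Fin.castLE (Nat.sub_le d 2))).vecMulLinear (z : V').1 = 0 :=
        (z : V').2
      rw [LinearMap.mem_ker]
      ext i
      by_cases hi : (i : ℕ) < d - 2
      · have := congrFun hv ⟨i, hi⟩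
        exact this
      · by_cases hi2 : (i : ℕ) = d - 2
        · have : i = c1 := Fin.ext hi2
          rw [this]; exact hz1
        · have : i = c2 := Fin.ext (by have := i.2; simp [c2]; omega)
          rw [this]; exact hz2
    let h : LinearMap.ker g →ₗ[F] LinearMap.ker A.vecMulLinear :=
      (V'.subtype.comp (LinearMap.ker g).subtype).codRestrict _ hmem
    apply LinearMap.finrank_le_finrank_of_injective (f := h)
    intro a b hab
    have := congrArg Subtype.val hab
    exact Subtype.ext (Subtype.ext this)
  omega

/-- generic rank -/
theorem finrank_ker_generic {R F : Type} [CommRing R] [IsDomain R] [Field F] [Algebra R F]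
    [IsFractionRing R F] {d e : ℕ} (φ : Matrix (Fin (d + e)) (Fin d) R)
    (hinj : Function.Injective φ.mulVecLin) :
    Module.finrank F (LinearMap.ker (φ.map (algebraMap R F)).vecMulLinear) ≤ e := by
  have hinjF : Function.Injective (φ.map (algebraMap R F)).mulVecLin := by
    rw [injective_iff_map_eq_zero]
    intro v hv
    obtain ⟨b, hb⟩ := IsLocalization.exist_integer_multiples_of_finite (nonZeroDivisors R) v
    choose w hw using hb
    have h0 : φ.mulVecLin w = 0 := by
      ext i
      apply IsFractionRing.injective R F
      have h := congrFun hv i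
      simp only [Matrix.mulVecLin_apply, Matrix.mulVec, dotProduct, Matrix.map_apply,
        Pi.zero_apply] at h ⊢
      rw [map_sum, map_zero]
      simp_rw [map_mul, hw, Algebra.smul_def]
      calc _ = algebraMap R F b * ∑ j, algebraMap R F (φ i j) * v j := by
            rw [Finset.mul_sum]; exact Finset.sum_congr rfl fun j _ => by ring
        _ = 0 := by rw [h, mul_zero]
    have hw0 : w = 0 := hinj (by rw [h0, map_zero])
    ext i
    have := hw i
    rw [hw0, Pi.zero_apply, map_zero, Algebra.smul_def, eq_comm, mul_eq_zero] at this
    refine this.resolve_left ?_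
    rw [← ne_eq, map_ne_zero_iff _ (IsFractionRing.injective R F)]
    exact nonZeroDivisors.ne_zero b.2
  set A := φ.map (algebraMap R F)
  have h1 := A.vecMulLinear.finrank_range_add_finrank_ker
  have h2 : Module.finrank F (LinearMap.range A.vecMulLinear) = d := by
    rw [← Matrix.mulVecLin_transpose]
    change A.transpose.rank = d
    rw [Matrix.rank_transpose, Matrix.rank, LinearMap.finrank_range_of_inj hinjF]
    simp
  simp at h1
  omega

theorem finrank_ker_of_gens {R F E : Type} [CommRing R] [Field F] [Algebra R F]
    [AddCommGroup E] [Module R E] {d n : ℕ} (φ : Matrix (Fin n) (Fin d) R)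
    (π : (Fin n → R) →ₗ[R] E) (hsurj : Function.Surjective π)
    (hker : LinearMap.ker π = LinearMap.range φ.mulVecLin)
    (p : Ideal R) [p.IsPrime] (hp : ∀ r : R, algebraMap R F r = 0 ↔ r ∈ p)
    (s : Finset (LocalizedModule p.primeCompl E))
    (hs : Submodule.span (Localization.AtPrime p)
          (s : Set (LocalizedModule p.primeCompl E)) = ⊤) :
    Module.finrank F (LinearMap.ker (φ.map (algebraMap R F)).vecMulLinear) ≤ s.card := by
  classical
  set A := φ.map (algebraMap R F)
  set V := LinearMap.ker A.vecMulLinear with hV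
  -- the functional on `R^n`
  let ev : (Fin n → F) → (Fin n → R) →ₗ[R] F := fun v =>
    ∑ j, (LinearMap.proj j : (Fin n → R) →ₗ[R] R).smulRight (v j)
  have hev : ∀ v z, ev v z = ∑ j, algebraMap R F (z j) * v j := by
    intro v z
    simp [ev, Algebra.smul_def]
  have hunit : ∀ x : p.primeCompl, IsUnit ((algebraMap R (Module.End R F)) x) := by
    intro x
    have hx : algebraMap R F x ≠ 0 := fun h => x.2 ((hp _).1 h)
    rw [Module.End.isUnit_iff]
    constructor
    · intro a b hab
      simp only [Module.algebraMap_end_apply, Algebra.smul_def] at hab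
      exact mul_left_cancel₀ hx hab
    · intro b
      refine ⟨(algebraMap R F x)⁻¹ * b, ?_⟩
      simp only [Module.algebraMap_end_apply, Algebra.smul_def]
      rw [mul_inv_cancel_left₀ hx]
  have hkv : ∀ v : V, LinearMap.ker π ≤ LinearMap.ker (ev v) := by
    rintro ⟨v, hv⟩
    rw [hker]
    rintro _ ⟨w, rfl⟩
    rw [LinearMap.mem_ker, hev]
    rw [hV, LinearMap.mem_ker] at hv
    have h1 : ∀ i, ∑ j, v j * algebraMap R F (φ j i) = 0 := fun i => congrFun hv i
    simp only [Matrix.mulVecLin_apply, Matrix.mulVec, dotProduct, map_sum, map_mul, Finset.sum_mul]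
    rw [Finset.sum_comm]
    apply Finset.sum_eq_zero
    intro i _
    calc _ = algebraMap R F (w i) * ∑ j, v j * algebraMap R F (φ j i) := by
          rw [Finset.mul_sum]; exact Finset.sum_congr rfl fun j _ => by ring
      _ = 0 := by rw [h1, mul_zero]
  let h : V → (LocalizedModule p.primeCompl E →ₗ[R] F) := fun v =>
    LocalizedModule.lift p.primeCompl
      (((LinearMap.ker π).liftQ (ev v) (hkv v)).comp
        (π.quotKerEquivOfSurjective hsurj).symm.toLinearMap) hunit
  have hh : ∀ (v : V) z, h v (LocalizedModule.mkLinearMap p.primeCompl E (π z)) = ev v z := by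
    intro v z
    simp only [h, LocalizedModule.mkLinearMap_apply, LocalizedModule.lift_mk_one]
    have : (π.quotKerEquivOfSurjective hsurj).symm (π z) = (LinearMap.ker π).mkQ z := by
      rw [LinearEquiv.symm_apply_eq]; rfl
    simp [this]
  have hext : ∀ (g g' : LocalizedModule p.primeCompl E →ₗ[R] F),
      (∀ z, g (LocalizedModule.mkLinearMap p.primeCompl E (π z)) =
        g' (LocalizedModule.mkLinearMap p.primeCompl E (π z))) → g = g' := by
    intro g g' hgg
    apply IsLocalizedModule.ext p.primeCompl (LocalizedModule.mkLinearMap p.primeCompl E) hunit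
    ext z
    obtain ⟨z, rfl⟩ := hsurj z
    exact hgg z
  have hadd : ∀ v w : V, h (v + w) = h v + h w := by
    intro v w
    apply hext
    intro z
    rw [LinearMap.add_apply, hh, hh, hh, hev, hev, hev, ← Finset.sum_add_distrib]
    simp [mul_add]
  have hsmul : ∀ (c : F) (v : V) z, h (c • v) z = c * h v z := by
    intro c v z
    have : h (c • v) = (LinearMap.mulLeft R c).comp (h v) := by
      apply hext
      intro z
      rw [LinearMap.comp_apply, hh, hh, hev, hev, LinearMap.mulLeft_apply, Finset.mul_sum]
      refine Finset.sum_congr rfl fun j _ => ?_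
      simp
      ring
    rw [this]; rfl
  let G : V →ₗ[F] (s → F) :=
    { toFun := fun v z => h v z
      map_add' := fun v w => by ext z; simp [hadd]
      map_smul' := fun c v => by ext z; simp [hsmul] }
  have hG : Function.Injective G := by
    rw [injective_iff_map_eq_zero]
    intro v hv
    have hz : ∀ z, h v z = 0 := by
      intro z
      have hzm : z ∈ Submodule.span (Localization.AtPrime p)
          (s : Set (LocalizedModule p.primeCompl E)) := by rw [hs]; trivial
      induction hzm using Submodule.span_induction with
      | mem z hz => exact congrFun hv ⟨z, hz⟩
      | zero => exact map_zero _
      | add a b _ _ ha hb => rw [map_add, ha, hb, add_zero]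
      | smul r a _ ha =>
        obtain ⟨⟨r', t⟩, hrt⟩ := IsLocalization.surj p.primeCompl r
        simp only at hrt
        have h1 : (t : R) • (r • a) = r' • a := by
          rw [← algebraMap_smul (Localization.AtPrime p) (t : R), smul_smul, mul_comm, hrt,
            algebraMap_smul]
        have h2 := congrArg (h v) h1
        rw [(h v).map_smul (t : R), (h v).map_smul r', ha, smul_zero, Algebra.smul_def, mul_eq_zero] at h2
        exact h2.resolve_left fun h => t.2 ((hp _).1 h)
    apply Subtype.ext
    ext j
    have := hh v (Pi.single j 1)
    rw [hz, hev] at this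
    simp only [Pi.single_apply] at this
    simpa using this.symm
  have := LinearMap.finrank_le_finrank_of_injective hG
  simpa using this

theorem isAlgebraic_adjoin_of_field {F L : Type} [Field F] [Field L] [Algebra F L] (s : Set L)
    (h : IntermediateField.adjoin F s = ⊤) : Algebra.IsAlgebraic (Algebra.adjoin F s) L := by
  constructor
  intro z
  have hz : z ∈ IntermediateField.adjoin F s := by rw [h]; trivial
  rw [IntermediateField.mem_adjoin_iff_div] at hz
  obtain ⟨a, ha, b, hb, rfl⟩ := hz
  rw [div_eq_mul_inv]
  exact (isAlgebraic_algebraMap (⟨a, ha⟩ : Algebra.adjoin F s)).mul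
    (isAlgebraic_algebraMap (⟨b, hb⟩ : Algebra.adjoin F s)).inv

/-- the point `(x, y)` generates `L` as a field over `k` -/
def Gen (k : Type) {L ι κ : Type} [Field k] [Field L] [Algebra k L] (x : ι → L) (y : κ → L) : Prop :=
  ∀ S : Subfield L, (∀ c : k, algebraMap k L c ∈ S) → (∀ i, x i ∈ S) → (∀ j, y j ∈ S) → S = ⊤

theorem gen_adjoin {k F L : Type} [Field k] [Field F] [Field L] [Algebra k F] [Algebra k L]
    [Algebra F L] [IsScalarTower k F L] {d n r : ℕ} (x : Fin d → F) (y : Fin n → L)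
    (hgen : Gen k (fun i => algebraMap F L (x i)) y) (N : Fin r → Fin n → F) (b : Fin r → L)
    (hb : ∀ j, y j = ∑ s, algebraMap F L (N s j) * b s) :
    Algebra.IsAlgebraic (Algebra.adjoin F (Set.range b)) L := by
  apply isAlgebraic_adjoin_of_field
  have := hgen (IntermediateField.adjoin F (Set.range b)).toSubfield
    (fun c => by
      rw [IsScalarTower.algebraMap_apply k F L]
      exact (IntermediateField.adjoin F (Set.range b)).algebraMap_mem _)
    (fun i => (IntermediateField.adjoin F (Set.range b)).algebraMap_mem _)
    (fun j => by
      rw [hb]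
      refine sum_mem fun s _ => mul_mem ?_ ?_
      · exact (IntermediateField.adjoin F (Set.range b)).algebraMap_mem _
      · exact IntermediateField.subset_adjoin F _ ⟨s, rfl⟩)
  rw [eq_top_iff]
  intro z _
  have hz : z ∈ (IntermediateField.adjoin F (Set.range b)).toSubfield := by rw [this]; trivial
  exact hz

theorem trdeg_bound {k F L : Type} [Field k] [Field F] [Field L] [Algebra k F] [Algebra k L]
    [Algebra F L] [IsScalarTower k F L] {d n q : ℕ} (x : Fin d → F) (y : Fin n → L)
    (hgen : Gen k (fun i => algebraMap F L (x i)) y) 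
    (A : Matrix (Fin n) (Fin q) F)
    (hy : ∀ i, ∑ j, algebraMap F L (A j i) * y j = 0) :
    Algebra.trdeg F L ≤ Module.finrank F (LinearMap.ker A.vecMulLinear) := by
  obtain ⟨b, hb⟩ := exists_coeffs A (Module.finBasis F (LinearMap.ker A.vecMulLinear)) y hy
  have := gen_adjoin x y hgen _ b hb
  refine (Algebra.IsAlgebraic.trdeg_le_cardinalMk F (Set.range b)).trans ?_
  refine Cardinal.mk_range_le.trans ?_
  simp

theorem trdeg_fractionRing {k A F : Type} [Field k] [CommRing A] [IsDomain A] [Algebra k A] [Field F]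
    [Algebra A F] [Algebra k F] [IsScalarTower k A F] [IsFractionRing A F] :
    Algebra.trdeg k F = Algebra.trdeg k A := by
  have := IsFractionRing.injective A F
  have : FaithfulSMul A F := (faithfulSMul_iff_algebraMap_injective A F).2 this
  rw [← trdeg_add_eq k A (A := F)]
  have : Algebra.IsAlgebraic A F := IsLocalization.isAlgebraic F (nonZeroDivisors A)
  rw [trdeg_eq_zero (R := A), add_zero]

theorem point_inj_aux {k : Type} [Field k] {d e : ℕ} (hd : 3 ≤ d)
    {E : Type} [AddCommGroup E] [Module (MvPolynomial (Fin d) k) E]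
    (φ : Matrix (Fin (d + e)) (Fin d) (MvPolynomial (Fin d) k))
    (π : (Fin (d + e) → MvPolynomial (Fin d) k) →ₗ[MvPolynomial (Fin d) k] E)
    (hsurj : Function.Surjective π)
    (hker : LinearMap.ker π = LinearMap.range φ.mulVecLin)
    (hGd : ∀ (p : Ideal (MvPolynomial (Fin d) k)) (_ : p.IsPrime) (c : ℕ),
      ringKrullDim (Localization.AtPrime p) = (c : WithBot ℕ∞) → 1 ≤ c → c ≤ d - 1 →
      ∃ s : Finset (LocalizedModule p.primeCompl E), s.card ≤ c + e - 1 ∧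
        Submodule.span (Localization.AtPrime p)
          (s : Set (LocalizedModule p.primeCompl E)) = ⊤)
    {L : Type} [Field L] [Algebra k L] (x : Fin d → L) (y : Fin (d + e) → L)
    (hgen : Gen k x y)
    (hrel : ∀ i : Fin (d - 2), ∑ j, aeval x (φ j (Fin.castLE (Nat.sub_le d 2) i)) * y j = 0)
    (htr : ((d + e + 2 : ℕ) : Cardinal) ≤ Algebra.trdeg k L) 
    (p : Ideal (MvPolynomial (Fin d) k)) (hpp : p.IsPrime) (hpne : p ≠ ⊥)
    {F : Type} [Field F] [Algebra k F] [Algebra (MvPolynomial (Fin d) k) F]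
    [IsScalarTower k (MvPolynomial (Fin d) k) F] [Algebra F L] [IsScalarTower k F L]
    (hFL : ∀ r : MvPolynomial (Fin d) k, algebraMap F L (algebraMap _ F r) = aeval x r)
    (hp : ∀ r : MvPolynomial (Fin d) k, algebraMap _ F r = 0 ↔ r ∈ p)
    (htF : Algebra.trdeg k F = Algebra.trdeg k (MvPolynomial (Fin d) k ⧸ p)) : False := by
  let A : Matrix (Fin (d + e)) (Fin d) F := φ.map (algebraMap _ F)
  let A' := A.submatrix id (Fin.castLE (Nat.sub_le d 2))
  have hb := trdeg_bound (k := k) (F := F) (L := L) (fun i => algebraMap _ F (X i : MvPolynomial (Fin d) k)) y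
    (by simpa [hFL] using hgen) A' (by
      intro i
      rw [← hrel i]
      refine Finset.sum_congr rfl fun j _ => ?_
      simp [A', A, hFL])
  have hsum := trdeg_add_eq k F (A := L)
  have htle : Algebra.trdeg k (MvPolynomial (Fin d) k ⧸ p) ≤ d := by
    have := trdeg_le_of_surjective (Ideal.Quotient.mkₐ k p) (Ideal.Quotient.mkₐ_surjective k p)
    simpa using this
  obtain ⟨t, ht⟩ := Cardinal.lt_aleph0.1 (htle.trans_lt (Cardinal.natCast_lt_aleph0))
  rw [ht] at htle htF
  have htle : t ≤ d := by exact_mod_cast htle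
  have hht := height_add_trdeg (d - t) p (by rw [ht]; exact_mod_cast (by omega))
  obtain ⟨c, hc⟩ := ENat.ne_top_iff_exists.1 (ne_top_of_le_ne_top (ENat.natCast_ne_top _) hht)
  rw [← hc] at hht
  have hht : c ≤ d - t := by exact_mod_cast hht
  have hc0 : c ≠ 0 := by
    rintro rfl
    exact hpne (Ideal.height_eq_zero_iff_eq_bot.1 (by rw [← hc]; rfl))
  have htot : d + e + 2 ≤ t + Module.finrank F (LinearMap.ker A'.vecMulLinear) := by
    have := htr.trans (hsum.symm.le.trans (add_le_add htF.le hb))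
    exact_mod_cast this
  have hn : Module.finrank F (LinearMap.ker A'.vecMulLinear) ≤ d + e := by
    simpa using (LinearMap.ker A'.vecMulLinear).finrank_le
  by_cases hcd : c ≤ d - 1
  · obtain ⟨s, hs, hspan⟩ := hGd p hpp c
      (by rw [IsLocalization.AtPrime.ringKrullDim_eq_height p, ← hc]; rfl) (by omega) hcd
    have h1 := finrank_ker_of_gens (F := F) φ π hsurj hker p hp s hspan
    have h2 := finrank_ker_drop (by omega) A
    change Module.finrank F (LinearMap.ker A.vecMulLinear) ≤ _ at h1
    change Module.finrank F (LinearMap.ker A'.vecMulLinear) ≤ _ at h2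
    omega
  · omega

theorem exists_field {k A L : Type} [Field k] [CommRing A] [IsDomain A] [Algebra k A] [Field L]
    [Algebra k L] (g : A →ₐ[k] L) (hg : Function.Injective g) :
    ∃ (F : Type) (_ : Field F) (_ : Algebra k F) (_ : Algebra A F) (_ : IsScalarTower k A F)
      (_ : Algebra F L) (_ : IsScalarTower k F L),
      (∀ a, algebraMap F L (algebraMap A F a) = g a) ∧ Algebra.trdeg k F = Algebra.trdeg k A := by
  let G : FractionRing A →ₐ[k] L := IsFractionRing.liftAlgHom hg
  let alg : Algebra (FractionRing A) L := G.toRingHom.toAlgebra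
  refine ⟨FractionRing A, inferInstance, inferInstance, inferInstance, inferInstance, alg,
    IsScalarTower.of_algebraMap_eq fun c => (G.commutes c).symm, ?_, trdeg_fractionRing⟩
  intro a
  change G (algebraMap A (FractionRing A) a) = _
  simp [G, IsFractionRing.liftAlgHom_apply, IsFractionRing.lift_algebraMap]

theorem point_inj {k : Type} [Field k] {d e : ℕ} (hd : 3 ≤ d)
    {E : Type} [AddCommGroup E] [Module (MvPolynomial (Fin d) k) E]
    (φ : Matrix (Fin (d + e)) (Fin d) (MvPolynomial (Fin d) k))
    (π : (Fin (d + e) → MvPolynomial (Fin d) k) →ₗ[MvPolynomial (Fin d) k] E)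
    (hsurj : Function.Surjective π)
    (hker : LinearMap.ker π = LinearMap.range φ.mulVecLin)
    (hGd : ∀ (p : Ideal (MvPolynomial (Fin d) k)) (_ : p.IsPrime) (c : ℕ),
      ringKrullDim (Localization.AtPrime p) = (c : WithBot ℕ∞) → 1 ≤ c → c ≤ d - 1 →
      ∃ s : Finset (LocalizedModule p.primeCompl E), s.card ≤ c + e - 1 ∧
        Submodule.span (Localization.AtPrime p)
          (s : Set (LocalizedModule p.primeCompl E)) = ⊤)
    {L : Type} [Field L] [Algebra k L] (x : Fin d → L) (y : Fin (d + e) → L)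
    (hgen : Gen k x y)
    (hrel : ∀ i : Fin (d - 2), ∑ j, aeval x (φ j (Fin.castLE (Nat.sub_le d 2) i)) * y j = 0)
    (htr : ((d + e + 2 : ℕ) : Cardinal) ≤ Algebra.trdeg k L) :
    Function.Injective (aeval x : MvPolynomial (Fin d) k →ₐ[k] L) := by
  set p := RingHom.ker (aeval x : MvPolynomial (Fin d) k →ₐ[k] L) with hpdef
  have hpp : p.IsPrime := RingHom.ker_isPrime _
  by_contra hinj
  have hpne : p ≠ ⊥ := by
    intro h
    exact hinj ((RingHom.injective_iff_ker_eq_bot _).2 h)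
  obtain ⟨F, _, _, _, _, _, _, hF, htF⟩ :=
    exists_field (Ideal.kerLiftAlg (aeval x : MvPolynomial (Fin d) k →ₐ[k] L))
      (Ideal.kerLiftAlg_injective _)
  let alg : Algebra (MvPolynomial (Fin d) k) F :=
    ((algebraMap (MvPolynomial (Fin d) k ⧸ p) F).comp (Ideal.Quotient.mk p)).toAlgebra
  have hst : IsScalarTower k (MvPolynomial (Fin d) k) F := IsScalarTower.of_algebraMap_eq fun c => by
    rw [IsScalarTower.algebraMap_apply k (MvPolynomial (Fin d) k ⧸ p) F]; rfl
  have hFL : ∀ r : MvPolynomial (Fin d) k, algebraMap F L (algebraMap _ F r) = aeval x r :=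
    fun r => hF (Ideal.Quotient.mk p r)
  have hp : ∀ r : MvPolynomial (Fin d) k, algebraMap _ F r = 0 ↔ r ∈ p := by
    intro r
    rw [hpdef, RingHom.mem_ker]
    rw [← hFL, map_eq_zero (algebraMap F L)]
  exact point_inj_aux hd φ π hsurj hker hGd x y hgen hrel htr p hpp hpne hFL hp htF

theorem transfer {k : Type} [Field k] {d e : ℕ} (hd : 3 ≤ d)
    (φ : Matrix (Fin (d + e)) (Fin d) (MvPolynomial (Fin d) k))
    (hinj : Function.Injective φ.mulVecLin)
    {L : Type} [Field L] [Algebra k L] (x : Fin d → L) (y : Fin (d + e) → L)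
    (hgen : Gen k x y)
    (hrel : ∀ i : Fin (d - 2), ∑ j, aeval x (φ j (Fin.castLE (Nat.sub_le d 2) i)) * y j = 0)
    (htr : ((d + e + 2 : ℕ) : Cardinal) ≤ Algebra.trdeg k L)
    (hx : Function.Injective (aeval x : MvPolynomial (Fin d) k →ₐ[k] L))
    {L' : Type} [Field L'] [Algebra k L'] (x' : Fin d → L') (y' : Fin (d + e) → L')
    (hrel' : ∀ i : Fin (d - 2), ∑ j, aeval x' (φ j (Fin.castLE (Nat.sub_le d 2) i)) * y' j = 0)
    (hx' : Function.Injective (aeval x' : MvPolynomial (Fin d) k →ₐ[k] L'))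
    (f : MvPolynomial (Fin (d + e)) k) (hf : aeval y f = 0) : aeval y' f = 0 := by
  let F := FractionRing (MvPolynomial (Fin d) k)
  let G : F →ₐ[k] L := IsFractionRing.liftAlgHom hx
  let _ : Algebra F L := G.toRingHom.toAlgebra
  have : IsScalarTower k F L := IsScalarTower.of_algebraMap_eq fun c => (G.commutes c).symm
  have hFL : ∀ r : MvPolynomial (Fin d) k, algebraMap F L (algebraMap _ F r) = aeval x r := by
    intro r
    change G (algebraMap (MvPolynomial (Fin d) k) F r) = _
    simp [G, IsFractionRing.liftAlgHom_apply, IsFractionRing.lift_algebraMap]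
  let G' : F →ₐ[k] L' := IsFractionRing.liftAlgHom hx'
  let _ : Algebra F L' := G'.toRingHom.toAlgebra
  have : IsScalarTower k F L' := IsScalarTower.of_algebraMap_eq fun c => (G'.commutes c).symm
  have hFL' : ∀ r : MvPolynomial (Fin d) k, algebraMap F L' (algebraMap _ F r) = aeval x' r := by
    intro r
    change G' (algebraMap (MvPolynomial (Fin d) k) F r) = _
    simp [G', IsFractionRing.liftAlgHom_apply, IsFractionRing.lift_algebraMap]
  let A : Matrix (Fin (d + e)) (Fin d) F := φ.map (algebraMap _ F)
  let A' := A.submatrix id (Fin.castLE (Nat.sub_le d 2))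
  have hr : Module.finrank F (LinearMap.ker A'.vecMulLinear) ≤ e + 2 := by
    have h1 := finrank_ker_generic (F := F) φ hinj
    have h2 := finrank_ker_drop (by omega) A
    change Module.finrank F (LinearMap.ker A.vecMulLinear) ≤ _ at h1
    change Module.finrank F (LinearMap.ker A'.vecMulLinear) ≤ _ at h2
    omega
  let N := Module.finBasis F (LinearMap.ker A'.vecMulLinear)
  obtain ⟨b, hb⟩ := exists_coeffs A' N y (by
      intro i
      rw [← hrel i]
      refine Finset.sum_congr rfl fun j _ => ?_
      simp [A', A, hFL])
  obtain ⟨b', hb'⟩ := exists_coeffs A' N y' (by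
      intro i
      rw [← hrel' i]
      refine Finset.sum_congr rfl fun j _ => ?_
      simp [A', A, hFL'])
  have halg := gen_adjoin (k := k) (F := F) (L := L) (fun i => algebraMap _ F (X i : MvPolynomial (Fin d) k)) y
    (by simpa [hFL] using hgen) _ b hb
  have htF : Algebra.trdeg k F = d := by
    rw [trdeg_fractionRing (A := MvPolynomial (Fin d) k)]; simp
  have hsum := trdeg_add_eq k F (A := L)
  have hle : Algebra.trdeg F L < Cardinal.aleph0 := by
    refine (Algebra.IsAlgebraic.trdeg_le_cardinalMk F (Set.range b)).trans_lt ?_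
    exact (Cardinal.mk_range_le).trans_lt (by rw [Cardinal.mk_fin]; exact Cardinal.natCast_lt_aleph0)
  obtain ⟨t, ht⟩ := Cardinal.lt_aleph0.1 hle
  rw [htF, ht] at hsum
  rw [← hsum] at htr
  have htr : d + e + 2 ≤ d + t := by exact_mod_cast htr
  have hbT := Algebra.IsAlgebraic.isTranscendenceBasis_of_le_trdeg_of_finite F b (by
    rw [ht, Cardinal.mk_fin]
    exact_mod_cast (by omega))
  let P : MvPolynomial (Fin (Module.finrank F (LinearMap.ker A'.vecMulLinear))) F :=
    aeval (fun j => ∑ s, C ((N s : Fin (d + e) → F) j) * X s) f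
  have key : ∀ {M : Type} [Field M] [Algebra k M] [Algebra F M] [IsScalarTower k F M]
      (z : Fin (d + e) → M) (w : Fin (Module.finrank F (LinearMap.ker A'.vecMulLinear)) → M)
      (_ : ∀ j, z j = ∑ s, algebraMap F M ((N s : Fin (d + e) → F) j) * w s),
      aeval w P = aeval z f := by
    intro M _ _ _ _ z w hzw
    have : ((aeval w : MvPolynomial _ F →ₐ[F] M).restrictScalars k).comp
      (aeval (fun j => ∑ s, C ((N s : Fin (d + e) → F) j) * X s)) =
        (aeval z : MvPolynomial (Fin (d + e)) k →ₐ[k] M) := by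
      ext j
      simp [hzw]
    rw [← this]; rfl
  have hP : P = 0 := hbT.1 (by rw [key y b hb, hf, map_zero])
  rw [← key y' b' hb', hP, map_zero]

theorem exists_point_aux {k K : Type} [Field k] [Field K] [Algebra k K] {d n q r : ℕ}
    (yK : Fin n → K) (hgen : Gen k (fun i : Empty => i.elim) yK) (M : Fin d → Fin q → K)
    (N : Fin r → Fin d → K) (hN : ∀ s i, ∑ t, N s t * M t i = 0)
    (D : Fin r → Fin d → K) (hD : ∀ s s', ∑ t, D s t * N s' t = if s' = s then 1 else 0)
    {L : Type} [Field L] [Algebra k L] [Algebra K L] [IsScalarTower k K L]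
    [Algebra (MvPolynomial (Fin r) K) L] [IsScalarTower K (MvPolynomial (Fin r) K) L]
    [IsFractionRing (MvPolynomial (Fin r) K) L] (x : Fin d → L)
    (hxd : ∀ t, x t = ∑ s, algebraMap K L (N s t) * algebraMap (MvPolynomial (Fin r) K) L (X s)) :
    Gen k x (fun j => algebraMap K L (yK j)) ∧
      (∀ i, ∑ t, x t * algebraMap K L (M t i) = 0) ∧
      Algebra.trdeg k K + r ≤ Algebra.trdeg k L := by
  refine ⟨?_, ?_, ?_⟩
  · intro S hc hx hy
    have hK : ∀ c : K, algebraMap K L c ∈ S := by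
      have := hgen (S.comap (algebraMap K L))
        (fun c => by
          change algebraMap K L (algebraMap k K c) ∈ S
          rw [← IsScalarTower.algebraMap_apply]; exact hc c)
        (fun i => i.elim) (fun j => hy j)
      intro c
      have hcc : c ∈ S.comap (algebraMap K L) := by rw [this]; trivial
      exact hcc
    have hX : ∀ s, algebraMap (MvPolynomial (Fin r) K) L (X s) ∈ S := by
      intro s
      have h1 : algebraMap (MvPolynomial (Fin r) K) L (X s) = ∑ t, algebraMap K L (D s t) *
          x t := by
        simp_rw [hxd, Finset.mul_sum]
        rw [Finset.sum_comm]
        have h4 : ∀ s', ∑ t, algebraMap K L (D s t) *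
            (algebraMap K L (N s' t) * algebraMap (MvPolynomial (Fin r) K) L (X s')) =
            algebraMap K L (if s' = s then 1 else 0) * algebraMap (MvPolynomial (Fin r) K) L (X s') := by
          intro s'
          rw [← hD s s', map_sum, Finset.sum_mul]
          refine Finset.sum_congr rfl fun t _ => ?_
          rw [map_mul]; ring
        simp_rw [h4]
        simp
      rw [h1]
      exact sum_mem fun t _ => mul_mem (hK _) (hx t)
    have hQ : ∀ P : MvPolynomial (Fin r) K, algebraMap (MvPolynomial (Fin r) K) L P ∈ S := by
      intro P
      induction P using MvPolynomial.induction_on with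
      | C a =>
        have : algebraMap (MvPolynomial (Fin r) K) L (C a) = algebraMap K L a := by
          rw [IsScalarTower.algebraMap_apply K (MvPolynomial (Fin r) K) L]; rfl
        rw [this]; exact hK a
      | add a b ha hb => rw [map_add]; exact add_mem ha hb
      | mul_X a s ha => rw [map_mul]; exact mul_mem ha (hX s)
    rw [eq_top_iff]
    intro z _
    obtain ⟨a, b, _, rfl⟩ := IsFractionRing.div_surjective (A := MvPolynomial (Fin r) K) z
    exact div_mem (hQ a) (hQ b)
  · intro i
    simp_rw [hxd, Finset.sum_mul]
    rw [Finset.sum_comm]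
    apply Finset.sum_eq_zero
    intro s _
    calc _ = algebraMap K L (∑ t, N s t * M t i) * algebraMap (MvPolynomial (Fin r) K) L (X s) := by
          rw [map_sum, Finset.sum_mul]
          refine Finset.sum_congr rfl fun t _ => ?_
          rw [map_mul]; ring
      _ = 0 := by rw [hN, map_zero, zero_mul]
  · rw [← trdeg_add_eq k K (A := L)]
    have h1 : Algebra.trdeg K L = r := by
      rw [trdeg_fractionRing (A := MvPolynomial (Fin r) K)]; simp
    rw [h1]

theorem exists_point {k K : Type} [Field k] [Field K] [Algebra k K] {d n q : ℕ}
    (yK : Fin n → K) (hgen : Gen k (fun i : Empty => i.elim) yK) (M : Matrix (Fin d) (Fin q) K) :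
    ∃ (L : Type) (_ : Field L) (_ : Algebra k L) (_ : Algebra K L) (_ : IsScalarTower k K L)
      (x : Fin d → L), Gen k x (fun j => algebraMap K L (yK j)) ∧
      (∀ i, ∑ t, x t * algebraMap K L (M t i) = 0) ∧
      Algebra.trdeg k K + (d - M.rank : ℕ) ≤ Algebra.trdeg k L := by
  let V := LinearMap.ker M.vecMulLinear
  let N := Module.finBasis K V
  have h2 := M.vecMulLinear.finrank_range_add_finrank_ker
  have h3 : Module.finrank K (LinearMap.range M.vecMulLinear) = M.rank := by
    rw [← Matrix.mulVecLin_transpose, ← Matrix.rank_transpose]; rfl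
  rw [h3] at h2
  simp at h2
  have h4 : d - M.rank ≤ Module.finrank K V := by
    change d - M.rank ≤ Module.finrank K (LinearMap.ker M.vecMulLinear)
    omega
  have hg : ∀ s, ∃ g : (Fin d → K) →ₗ[K] K, ∀ s', g (N s' : Fin d → K) = N.coord s (N s') := by
    intro s
    obtain ⟨g, hg⟩ := LinearMap.exists_extend (N.coord s)
    exact ⟨g, fun s' => LinearMap.congr_fun hg (N s')⟩
  choose g hg using hg
  obtain ⟨p1, p2, p3⟩ := exists_point_aux yK hgen M (fun s => (N s : Fin d → K))
    (fun s i => congrFun (N s).2 i) (fun s t => g s (Pi.single t 1)) (by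
      intro s s'
      have h3 : g s (N s' : Fin d → K) = if s' = s then 1 else 0 := by
        rw [hg]
        simp [Finsupp.single_apply]
      rw [← h3]
      conv_rhs => rw [pi_eq_sum_univ' (N s' : Fin d → K), map_sum]
      refine Finset.sum_congr rfl fun t _ => ?_
      rw [map_smul, smul_eq_mul, mul_comm])
    (L := FractionRing (MvPolynomial (Fin (Module.finrank K V)) K)) _ (fun t => rfl)
  refine ⟨_, _, _, _, inferInstance, _, p1, p2, le_trans ?_ p3⟩
  gcongr

theorem gen_quot {k A K : Type} [Field k] [CommRing A] [IsDomain A] [Field K] [Algebra k A] [Algebra k K]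
    [Algebra A K] [IsScalarTower k A K] [IsFractionRing A K] {n : ℕ}
    (g : MvPolynomial (Fin n) k →ₐ[k] A) (hg : Function.Surjective g) :
    Gen k (fun i : Empty => i.elim) (fun j => algebraMap A K (g (X j))) := by
  intro S hc _ hy
  have hQ : ∀ P, algebraMap A K (g P) ∈ S := by
    intro P
    induction P using MvPolynomial.induction_on with
    | C a =>
      have : algebraMap A K (g (C a)) = algebraMap k K a := by
        rw [IsScalarTower.algebraMap_apply k A K, ← g.commutes]; rfl
      rw [this]; exact hc a
    | add a b ha hb => rw [map_add, map_add]; exact add_mem ha hb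
    | mul_X a s ha => rw [map_mul, map_mul]; exact mul_mem ha (hy s)
  rw [eq_top_iff]
  intro z _
  obtain ⟨a, b, _, rfl⟩ := IsFractionRing.div_surjective (A := A) z
  obtain ⟨a, rfl⟩ := hg a
  obtain ⟨b, rfl⟩ := hg b
  exact div_mem (hQ a) (hQ b)

theorem rel_of_dual {k L : Type} [Field k] [Field L] [Algebra k L] {d n : ℕ}
    (x : Fin d → L) (y : Fin n → L) (a : Fin n → MvPolynomial (Fin d) k)
    (b : Fin d → MvPolynomial (Fin n) k)
    (h : ∑ j, (rename Sum.inl (a j)) * X (Sum.inr j) =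
      ∑ t : Fin d, X (Sum.inl t) * (rename Sum.inr (b t) : MvPolynomial (Fin d ⊕ Fin n) k)) :
    ∑ j, aeval x (a j) * y j = ∑ t, x t * aeval y (b t) := by
  have h2 := congrArg (aeval (Sum.elim x y)) h
  simpa [aeval_rename, Function.comp_def] using h2

/-- the geometric core: a prime element cannot divide all maximal minors -/
theorem core {k : Type} [Field k] {d e : ℕ} (hd : 3 ≤ d)
    {E : Type} [AddCommGroup E] [Module (MvPolynomial (Fin d) k) E]
    (φ : Matrix (Fin (d + e)) (Fin d) (MvPolynomial (Fin d) k))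
    (hinj : Function.Injective φ.mulVecLin)
    (π : (Fin (d + e) → MvPolynomial (Fin d) k) →ₗ[MvPolynomial (Fin d) k] E)
    (hsurj : Function.Surjective π)
    (hker : LinearMap.ker π = LinearMap.range φ.mulVecLin)
    (hGd : ∀ (p : Ideal (MvPolynomial (Fin d) k)) (_ : p.IsPrime) (c : ℕ),
      ringKrullDim (Localization.AtPrime p) = (c : WithBot ℕ∞) → 1 ≤ c → c ≤ d - 1 →
      ∃ s : Finset (LocalizedModule p.primeCompl E), s.card ≤ c + e - 1 ∧
        Submodule.span (Localization.AtPrime p)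
          (s : Set (LocalizedModule p.primeCompl E)) = ⊤)
    (σ : Matrix (Fin d) (Fin (d - 2)) (MvPolynomial (Fin (d + e)) k))
    (hσ : ∀ i : Fin (d - 2),
      ∑ j, (rename Sum.inl (φ j (Fin.castLE (Nat.sub_le d 2) i))) * X (Sum.inr j) =
      ∑ t : Fin d, X (Sum.inl t) *
        (rename Sum.inr (σ t i) : MvPolynomial (Fin d ⊕ Fin (d + e)) k))
    (f : MvPolynomial (Fin (d + e)) k) (hf : Prime f)
    (hmin : ∀ g : Fin (d - 2) → Fin d, (σ.submatrix g id).det ∈ Ideal.span {f}) : False := by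
  have hpr : (Ideal.span {f}).IsPrime := (Ideal.span_singleton_prime hf.ne_zero).2 hf
  -- a uniform construction of points
  have key : ∀ (A : Type) [CommRing A] [IsDomain A] [Algebra k A]
      (g : MvPolynomial (Fin (d + e)) k →ₐ[k] A) (_ : Function.Surjective g)
      (_ : ∀ ρ : ℕ, (σ.map fun s => algebraMap A (FractionRing A) (g s)).rank = ρ →
        ((d + e + 2 : ℕ) : Cardinal) ≤ Algebra.trdeg k A + (d - ρ : ℕ)),
      ∃ (L : Type) (_ : Field L) (_ : Algebra k L) (x : Fin d → L) (y : Fin (d + e) → L),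
        Gen k x y ∧
        (∀ i : Fin (d - 2), ∑ j, aeval x (φ j (Fin.castLE (Nat.sub_le d 2) i)) * y j = 0) ∧
        ((d + e + 2 : ℕ) : Cardinal) ≤ Algebra.trdeg k L ∧ (aeval y f = 0 ↔ g f = 0) := by
    intro A _ _ _ g hg hrk
    obtain ⟨L, _, _, _, _, x, h1, h2, h3⟩ := exists_point
      (fun j => algebraMap A (FractionRing A) (g (X j))) (gen_quot (K := FractionRing A) g hg)
      (σ.map fun s => algebraMap A (FractionRing A) (g s))
    have hy : ∀ P, aeval (fun j => algebraMap (FractionRing A) L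
        (algebraMap A (FractionRing A) (g (X j)))) P =
        algebraMap (FractionRing A) L (algebraMap A (FractionRing A) (g P)) := by
      intro P
      have : (aeval (fun j => algebraMap (FractionRing A) L
          (algebraMap A (FractionRing A) (g (X j)))) : MvPolynomial (Fin (d + e)) k →ₐ[k] L) =
          (IsScalarTower.toAlgHom k (FractionRing A) L).comp
            ((IsScalarTower.toAlgHom k A (FractionRing A)).comp g) := by
        ext j; simp
      rw [this]; rfl
    refine ⟨L, inferInstance, inferInstance, x, _, h1, ?_, ?_, ?_⟩
    · intro i
      rw [rel_of_dual x _ _ _ (hσ i)]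
      simp_rw [hy]
      exact h2 i
    · refine le_trans ?_ h3
      rw [trdeg_fractionRing (k := k) (A := A) (F := FractionRing A)]
      exact hrk _ rfl
    · rw [hy, map_eq_zero (algebraMap (FractionRing A) L)]
      exact map_eq_zero_iff _ (IsFractionRing.injective A (FractionRing A))
  obtain ⟨L1, _, _, x1, y1, hg1, hr1, ht1, hf1⟩ := key
    (MvPolynomial (Fin (d + e)) k ⧸ Ideal.span {f}) (Ideal.Quotient.mkₐ k _)
    (Ideal.Quotient.mkₐ_surjective k _) (by
      intro ρ hρ
      have hlt := rank_lt_of_minors (σ.map fun s =>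
        algebraMap _ (FractionRing (MvPolynomial (Fin (d + e)) k ⧸ Ideal.span {f}))
          (Ideal.Quotient.mkₐ k (Ideal.span {f}) s)) (by
        intro g
        have h0 : Ideal.Quotient.mk (Ideal.span {f}) (σ.submatrix g id).det = 0 :=
          Ideal.Quotient.eq_zero_iff_mem.2 (hmin g)
        have h1 := congrArg (algebraMap _ (FractionRing
          (MvPolynomial (Fin (d + e)) k ⧸ Ideal.span {f}))) h0
        rw [map_zero, RingHom.map_det, RingHom.map_det] at h1
        exact h1)
      rw [hρ] at hlt
      have ht := trdeg_quot_prime f hf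
      have h3 : ((1 + 2 : ℕ) : Cardinal) ≤ (d - ρ : ℕ) := by exact_mod_cast (by omega)
      calc ((d + e + 2 : ℕ) : Cardinal) = ((d + e : ℕ) : Cardinal) + 2 := by push_cast; rfl
        _ ≤ (Algebra.trdeg k (MvPolynomial (Fin (d + e)) k ⧸ Ideal.span {f}) + 1) + 2 := by
          gcongr
        _ = Algebra.trdeg k (MvPolynomial (Fin (d + e)) k ⧸ Ideal.span {f}) +
            ((1 + 2 : ℕ) : Cardinal) := by rw [add_assoc]; norm_num
        _ ≤ _ := by gcongr)
  obtain ⟨L2, _, _, x2, y2, hg2, hr2, ht2, hf2⟩ := key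
    (MvPolynomial (Fin (d + e)) k) (AlgHom.id k _) (fun z => ⟨z, rfl⟩) (by
      intro ρ hρ
      have hle := Matrix.rank_le_width (σ.map fun s =>
        algebraMap _ (FractionRing (MvPolynomial (Fin (d + e)) k))
          (AlgHom.id k (MvPolynomial (Fin (d + e)) k) s))
      rw [hρ] at hle
      have h1 : Algebra.trdeg k (MvPolynomial (Fin (d + e)) k) = ((d + e : ℕ) : Cardinal) := by
        simp
      rw [h1]
      exact_mod_cast (by omega))
  have i1 := point_inj hd φ π hsurj hker hGd x1 y1 hg1 hr1 ht1
  have i2 := point_inj hd φ π hsurj hker hGd x2 y2 hg2 hr2 ht2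
  have h1 : aeval y1 f = 0 := hf1.2
    (Ideal.Quotient.eq_zero_iff_mem.2 (Ideal.mem_span_singleton_self f))
  have h2 := transfer hd φ hinj x1 y1 hg1 hr1 ht1 i1 x2 y2 hr2 i2 f h1
  exact hf.ne_zero (hf2.1 h2)

theorem exists_prime_elt {k : Type} [Field k] {n : ℕ} (hn : 0 < n)
    (p : Ideal (MvPolynomial (Fin n) k)) (hp : p.IsPrime)
    (h : ringKrullDim (Localization.AtPrime p) < 2) :
    ∃ f, Prime f ∧ p ≤ Ideal.span {f} := by
  rw [IsLocalization.AtPrime.ringKrullDim_eq_height p] at h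
  have h : p.height < 2 := WithBot.coe_lt_coe.1 h
  by_cases hb : p = ⊥
  · exact ⟨X ⟨0, hn⟩, MvPolynomial.X_prime, by rw [hb]; exact bot_le⟩
  · obtain ⟨f, hfp, hf⟩ := hp.exists_mem_prime_of_ne_bot hb
    have h0 : p.height ≠ 0 := fun h0 => hb (Ideal.height_eq_zero_iff_eq_bot.1 h0)
    have h1 : p.height = 1 := by
      refine le_antisymm (Order.lt_add_one_iff_of_not_isMax ?_ |>.1 ?_) (Order.one_le_iff_ne_zero.2 h0)
      · simp
      · simpa [one_add_one_eq_two] using h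
    refine ⟨f, hf, ?_⟩
    exact (Ideal.eq_span_singleton_of_height_eq_one h1 hfp hf).le

theorem jacobian_dual_height
    (d e : ℕ) (hd : 3 ≤ d)
    (E : Type) [AddCommGroup E] [Module (MvPolynomial (Fin d) k) E]
    [Module.Finite (MvPolynomial (Fin d) k) E]
    -- `E` is torsion-free
    (htf : Submodule.torsion (MvPolynomial (Fin d) k) E = ⊥)
    -- `0 → R^d →φ R^{d+e} →π E → 0` is a (minimal) free resolution, so `pd E = 1`,
    -- `rank E = e`
    (φ : Matrix (Fin (d + e)) (Fin d) (MvPolynomial (Fin d) k))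
    (hinj : Function.Injective φ.mulVecLin)
    (π : (Fin (d + e) → MvPolynomial (Fin d) k) →ₗ[MvPolynomial (Fin d) k] E)
    (hsurj : Function.Surjective π)
    (hker : LinearMap.ker π = LinearMap.range φ.mulVecLin)
    -- `φ = [φ′ | φ″]`: the first `d−2` columns are linear, the last two are quadrics
    (hdeg : ∀ (i : Fin (d + e)) (j : Fin d),
      ((j : ℕ) < d - 2 → φ i j ∈ homogeneousSubmodule (Fin d) k 1) ∧
      (d - 2 ≤ (j : ℕ) → φ i j ∈ homogeneousSubmodule (Fin d) k 2))
    -- `I_1(φ) = (x_1,…,x_d)`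
    (hI1 : Ideal.span {r : MvPolynomial (Fin d) k | ∃ i j, φ i j = r} =
      Ideal.span (Set.range X))
    -- `E` is minimally generated by `μ(E) = d+e` elements
    (hμ : ∀ s : Finset E, Submodule.span (MvPolynomial (Fin d) k) (s : Set E) = ⊤ →
      d + e ≤ s.card)
    -- `E` satisfies `G_d`
    (hGd : ∀ (p : Ideal (MvPolynomial (Fin d) k)) (_ : p.IsPrime) (c : ℕ),
      ringKrullDim (Localization.AtPrime p) = (c : WithBot ℕ∞) → 1 ≤ c → c ≤ d - 1 →
      ∃ s : Finset (LocalizedModule p.primeCompl E), s.card ≤ c + e - 1 ∧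
        Submodule.span (Localization.AtPrime p)
          (s : Set (LocalizedModule p.primeCompl E)) = ⊤)
    -- the defining ideal `L` of the symmetric algebra: `[ℓ_1 … ℓ_d] = [y_1 … y_{d+e}]·φ`
    (ℓ : Fin d → B k d (d + e))
    (hℓ : ∀ i, ℓ i = ∑ j, (rename Sum.inl (φ j i)) * X (Sum.inr j))
    (L : Ideal (B k d (d + e))) (hL : L = Ideal.span (Set.range ℓ))
    -- the Jacobian dual `σ = B(φ′)` of the linear part `φ′` of `φ`
    (σ : Matrix (Fin d) (Fin (d - 2)) (T k (d + e)))
    (hσlin : ∀ t j, σ t j ∈ homogeneousSubmodule (Fin (d + e)) k 1)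
    (hσ : ∀ j : Fin (d - 2),
      ℓ (Fin.castLE (by omega) j) =
        ∑ t : Fin d, X (Sum.inl t) * (rename Sum.inr (σ t j) : B k d (d + e))) :
    htGE (minorsIdeal σ (d - 2)) 2 := by
  intro p hp hle
  by_contra hlt
  obtain ⟨f, hf, hpf⟩ := exists_prime_elt (by omega) p hp (not_le.1 hlt)
  refine core hd φ hinj π hsurj hker hGd σ ?_ f hf ?_
  · intro i
    rw [← hℓ]
    exact hσ i
  · intro g
    exact hpf (hle (Ideal.subset_span ⟨g, id, rfl⟩))

end Stmt8
end
end
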